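/- Let μ satisfy Assumption 1 and let t > 1. Denote by ρ_t the density of the absolutely continuous part of μ^{⊞t}. Let I_t be the number of connected components of the support of the absolutely continuous part of μ^{⊞t}, let C_t^0 be the number of points in the interior of that support at which ρ_t vanishes, and let C_t^∞ be the number of non-atomic points of that support at which ρ_t diverges. Set 𝒵_μ := {E ∈ ℝ \ supp(μ) : m_μ(E) = 0}. Then I_t + C_t^0 ≤ n_ac + |𝒵_μ| ≤ 2·n_ac + n_pp^out − 1. Moreover C_t^∞ equals the number of atoms of μ with mass exactly 1 − 1/t. -/

import Mathlib

open MeasureTheory Topology Filter Set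

noncomputable section

/-- The open upper half-plane ℂ⁺. -/
def UHP : Set ℂ := {z : ℂ | 0 < z.im}

/-- The closed upper half-plane ℂ⁺ ∪ ℝ. -/
def CUHP : Set ℂ := {z : ℂ | 0 ≤ z.im}

/-- Cauchy–Stieltjes transform `m_μ(z) = ∫ 1/(x−z) dμ(x)`. -/
def stT (μ : Measure ℝ) (z : ℂ) : ℂ := ∫ x, ((x : ℂ) - z)⁻¹ ∂μ

/-- Real-valued Cauchy–Stieltjes transform at real points (outside the support). -/
def stTR (μ : Measure ℝ) (E : ℝ) : ℝ := ∫ x, (x - E)⁻¹ ∂μ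

/-- Negative reciprocal Cauchy–Stieltjes transform `F_μ = −1/m_μ`. -/
def nrT (μ : Measure ℝ) (z : ℂ) : ℂ := -(stT μ z)⁻¹

/-- Support of a Borel measure on ℝ (the smallest closed set of full measure). -/
def msupp (μ : Measure ℝ) : Set ℝ := {x : ℝ | ∀ ε > 0, 0 < μ (Set.Ioo (x - ε) (x + ε))}

/-- Absolutely continuous part of μ with respect to Lebesgue measure. -/
def acPart (μ : Measure ℝ) : Measure ℝ := volume.withDensity (μ.rnDeriv volume)

/-- `I_μ(ω) = ∫ 1/|x−ω|² dμ(x)`. -/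
def Ifun (μ : Measure ℝ) (w : ℂ) : ℝ := ∫ x, (Complex.normSq ((x : ℂ) - w))⁻¹ ∂μ

/-- A sequence of the upper half-plane converging non-tangentially to `E ∈ ℝ`. -/
def NonTangentialSeq (z : ℕ → ℂ) (E : ℝ) : Prop :=
  (∀ n, z n ∈ UHP) ∧ Tendsto z atTop (𝓝 (E : ℂ)) ∧
    ∃ C : ℝ, ∀ n, |(z n).re - E| ≤ C * (z n).im

/-- The density `ρ_μ` of the a.c. part of `μ` vanishes at `x`
(via the Stieltjes inversion formula). -/
def densityVanishesAt (μ : Measure ℝ) (x : ℝ) : Prop :=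
  Tendsto (fun η : ℝ => (stT μ ((x : ℂ) + (η : ℂ) * Complex.I)).im) (𝓝[>] 0) (𝓝 0)

/-- The density `ρ_μ` of the a.c. part of `μ` diverges at `x`. -/
def densityDivergesAt (μ : Measure ℝ) (x : ℝ) : Prop :=
  Tendsto (fun η : ℝ => (stT μ ((x : ℂ) + (η : ℂ) * Complex.I)).im) (𝓝[>] 0) atTop

/-- Assumption 1. -/
structure Assumption1 (μ : Measure ℝ) (nac npp nppout : ℕ)
    (Em Ep : Fin nac → ℝ) (atom : Fin npp → ℝ) (ρ : ℝ → ℝ) : Prop where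
  prob : IsProbabilityMeasure μ
  compact : IsCompact (msupp μ)
  nac_pos : 1 ≤ nac
  npp_pos : 1 ≤ npp
  ρ_nonneg : ∀ x, 0 ≤ ρ x
  ac_density : acPart μ = volume.withDensity fun x => ENNReal.ofReal (ρ x)
  sing_atomic : μ.singularPart volume = ∑ j : Fin npp, μ {atom j} • Measure.dirac (atom j)
  atom_inj : Function.Injective atom
  atom_pos : ∀ j, 0 < μ {atom j}
  lt : ∀ j, Em j < Ep j
  ordered : ∀ i j : Fin nac, i < j → Ep i < Em j
  supp_ac : msupp (acPart μ) = ⋃ j, Set.Icc (Em j) (Ep j)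
  out_card : Nat.card {j : Fin npp // atom j ∉ msupp (acPart μ)} = nppout
  no_atom_endpoint : ∀ j i, atom j ≠ Em i ∧ atom j ≠ Ep i
  power_law : ∀ j, ∃ tm tp C : ℝ, -1 < tm ∧ tm < 1 ∧ -1 < tp ∧ tp < 1 ∧ 1 ≤ C ∧
    ∀ᵐ x ∂volume, x ∈ Set.Icc (Em j) (Ep j) →
      C⁻¹ < ρ x / ((x - Em j) ^ tm * (Ep j - x) ^ tp) ∧
      ρ x / ((x - Em j) ^ tm * (Ep j - x) ^ tp) < C

/-- The subordination function `ω_t` for the free convolution semi-group,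
together with its continuous extension to `ℂ⁺ ∪ ℝ`. -/
structure IsSubordT (μ : Measure ℝ) (t : ℝ) (ω : ℂ → ℂ) : Prop where
  diff : DifferentiableOn ℂ ω UHP
  maps : ∀ z ∈ UHP, ω z ∈ UHP
  imLe : ∀ z ∈ UHP, z.im ≤ (ω z).im
  limTop : Tendsto (fun η : ℝ => ω ((η : ℂ) * Complex.I) / ((η : ℂ) * Complex.I))
      atTop (𝓝 1)
  eqn : ∀ z ∈ UHP, (t : ℂ) * ω z - z = ((t : ℂ) - 1) * nrT μ (ω z)
  cont : ContinuousOn ω CUHP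

/-- `μt = μ^{⊞ t}`: the probability measure whose negative reciprocal Cauchy–Stieltjes
transform is `F_μ ∘ ω_t`, i.e. whose Cauchy–Stieltjes transform is `m_μ ∘ ω_t`. -/
def IsFreePow (μ : Measure ℝ) (ω : ℂ → ℂ) (μt : Measure ℝ) : Prop :=
  IsProbabilityMeasure μt ∧ ∀ z ∈ UHP, stT μt z = stT μ (ω z)

/-- Assumption 2 (for one of the two measures). -/
structure Assumption2 (μ : Measure ℝ) (n : ℕ) (Am Ap : Fin n → ℝ) (ρ : ℝ → ℝ) : Prop where
  prob : IsProbabilityMeasure μ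
  n_pos : 1 ≤ n
  centered : ∫ x, x ∂μ = 0
  ρ_nonneg : ∀ x, 0 ≤ ρ x
  ac : μ = volume.withDensity fun x => ENNReal.ofReal (ρ x)
  lt : ∀ j, Am j < Ap j
  ordered : ∀ i j : Fin n, i < j → Ap i < Am j
  supp_eq : msupp μ = ⋃ j, Set.Icc (Am j) (Ap j)
  power_law : ∀ j, ∃ sm sp C : ℝ, -1 < sm ∧ sm < 1 ∧ -1 < sp ∧ sp < 1 ∧ 1 ≤ C ∧
    ∀ᵐ x ∂volume, x ∈ Set.Icc (Am j) (Ap j) →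
      C⁻¹ < ρ x / ((x - Am j) ^ sm * (Ap j - x) ^ sp) ∧
      ρ x / ((x - Am j) ^ sm * (Ap j - x) ^ sp) < C

/-- The pair of subordination functions for the free additive convolution `μa ⊞ μb`. -/
structure IsSubordPair (μa μb : Measure ℝ) (ωa ωb : ℂ → ℂ) : Prop where
  diff_a : DifferentiableOn ℂ ωa UHP
  diff_b : DifferentiableOn ℂ ωb UHP
  maps_a : ∀ z ∈ UHP, ωa z ∈ UHP
  maps_b : ∀ z ∈ UHP, ωb z ∈ UHP
  imLe_a : ∀ z ∈ UHP, z.im ≤ (ωa z).im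
  imLe_b : ∀ z ∈ UHP, z.im ≤ (ωb z).im
  lim_a : Tendsto (fun η : ℝ => ωa ((η : ℂ) * Complex.I) / ((η : ℂ) * Complex.I))
      atTop (𝓝 1)
  lim_b : Tendsto (fun η : ℝ => ωb ((η : ℂ) * Complex.I) / ((η : ℂ) * Complex.I))
      atTop (𝓝 1)
  eqn_a : ∀ z ∈ UHP, ωa z + ωb z - z = nrT μa (ωb z)
  eqn_b : ∀ z ∈ UHP, ωa z + ωb z - z = nrT μb (ωa z)

/-- `μab = μa ⊞ μb`: the probability measure whose negative reciprocal Cauchy–Stieltjes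
transform is `F_{μa} ∘ ω_b`, i.e. whose Cauchy–Stieltjes transform is `m_{μa} ∘ ω_b`. -/
def IsFreeConv (μa μb : Measure ℝ) (ωb : ℂ → ℂ) (μab : Measure ℝ) : Prop :=
  IsProbabilityMeasure μab ∧ ∀ z ∈ UHP, stT μab z = stT μa (ωb z)

/-- `Ω` is the continuous extension of `ω` to `ℂ⁺ ∪ ℝ`, with values in the
Riemann sphere `ℂ ∪ {∞}`. -/
def ExtendsToRP (ω : ℂ → ℂ) (Ω : ℂ → OnePoint ℂ) : Prop :=
  ContinuousOn Ω CUHP ∧ ∀ z ∈ UHP, Ω z = (ω z : OnePoint ℂ)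

/-- `μhat` is the measure in the Nevanlinna representation
`F_μ(ω) − ω = −∫ x dμ + ∫ 1/(x−ω) dμ̂(x)`. -/
def IsNevanHat (μ μhat : Measure ℝ) : Prop :=
  IsFiniteMeasure μhat ∧ ∀ z ∈ UHP,
    nrT μ z - z = -((∫ x, x ∂μ : ℝ) : ℂ) + ∫ x, ((x : ℂ) - z)⁻¹ ∂μhat

end


theorem fp_cs (ν : Measure ℝ) (f g : ℝ → ℝ) (hf : Integrable (fun x => f x ^ 2) ν)
    (hg : Integrable (fun x => g x ^ 2) ν) (hfg : Integrable (fun x => f x * g x) ν) :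
    (∫ x, f x * g x ∂ν) ^ 2 ≤ (∫ x, f x ^ 2 ∂ν) * (∫ x, g x ^ 2 ∂ν) := by
  have key : ∀ s : ℝ, 0 ≤ (∫ x, g x ^ 2 ∂ν) * (s * s) + (2 * ∫ x, f x * g x ∂ν) * s
      + ∫ x, f x ^ 2 ∂ν := by
    intro s
    have h0 : 0 ≤ ∫ x, (f x + s * g x) ^ 2 ∂ν := integral_nonneg (fun x => sq_nonneg _)
    have h1 : ∫ x, (f x + s * g x) ^ 2 ∂ν
        = ∫ x, (f x ^ 2 + ((2 * s) * (f x * g x) + (s * s) * g x ^ 2)) ∂ν := by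
      congr 1; ext x; ring
    have hi : Integrable (fun x => (2 * s) * (f x * g x) + (s * s) * g x ^ 2) ν :=
      (hfg.const_mul _).add (hg.const_mul _)
    rw [h1, integral_add hf hi,
      integral_add (hfg.const_mul _) (hg.const_mul _), integral_const_mul,
      integral_const_mul] at h0
    linarith
  have := discrim_le_zero key
  unfold discrim at this
  nlinarith

theorem fp_ne {z : ℂ} (hz : z.im ≠ 0) (x : ℝ) : (x : ℂ) - z ≠ 0 := by
  intro h
  apply hz
  have := congrArg Complex.im h
  simpa using this

theorem fp_norm_ge {z : ℂ} (x : ℝ) : |z.im| ≤ ‖(x : ℂ) - z‖ := by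
  have := Complex.abs_im_le_norm ((x : ℂ) - z)
  simpa using this

theorem fp_meas (z : ℂ) : Measurable (fun x : ℝ => ((x : ℂ) - z)⁻¹) := by
  fun_prop

theorem fp_int (ν : Measure ℝ) [IsFiniteMeasure ν] {z : ℂ} (hz : z.im ≠ 0) :
    Integrable (fun x : ℝ => ((x : ℂ) - z)⁻¹) ν := by
  refine Integrable.of_bound (fp_meas z).aestronglyMeasurable (|z.im|⁻¹) ?_
  refine Eventually.of_forall fun x => ?_
  rw [norm_inv]
  exact inv_anti₀ (abs_pos.mpr hz) (fp_norm_ge x)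

theorem fp_int_sq (ν : Measure ℝ) [IsFiniteMeasure ν] {z : ℂ} (hz : z.im ≠ 0) :
    Integrable (fun x : ℝ => (Complex.normSq ((x : ℂ) - z))⁻¹) ν := by
  have hm : Measurable (fun x : ℝ => (Complex.normSq ((x : ℂ) - z))⁻¹) := by
    have : Measurable Complex.normSq := Complex.continuous_normSq.measurable
    fun_prop
  refine Integrable.of_bound hm.aestronglyMeasurable ((|z.im| ^ 2)⁻¹) ?_
  refine Eventually.of_forall fun x => ?_
  rw [norm_inv, Complex.normSq_eq_norm_sq, norm_pow, norm_norm]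
  have := fp_norm_ge (z := z) x
  have h2 := abs_pos.mpr hz
  gcongr

theorem fp_stT_im (ν : Measure ℝ) [IsFiniteMeasure ν] {z : ℂ} (hz : z.im ≠ 0) :
    (stT ν z).im = z.im * Ifun ν z := by
  unfold stT Ifun
  have h : (∫ x : ℝ, ((x : ℂ) - z)⁻¹ ∂ν).im = ∫ x : ℝ, (((x : ℂ) - z)⁻¹).im ∂ν :=
    ((integral_im (fp_int ν hz))).symm
  rw [h, ← integral_const_mul]
  congr 1; ext x
  rw [Complex.inv_im]
  simp [div_eq_mul_inv]

theorem fp_Ifun_nonneg (ν : Measure ℝ) (z : ℂ) : 0 ≤ Ifun ν z :=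
  integral_nonneg fun x => inv_nonneg.mpr (Complex.normSq_nonneg _)

theorem fp_Ifun_pos (ν : Measure ℝ) [IsFiniteMeasure ν] (hν : ν ≠ 0) {z : ℂ} (hz : z.im ≠ 0) :
    0 < Ifun ν z := by
  unfold Ifun
  rw [integral_pos_iff_support_of_nonneg (fun x => inv_nonneg.mpr (Complex.normSq_nonneg _))
    (fp_int_sq ν hz)]
  have : Function.support (fun x : ℝ => (Complex.normSq ((x : ℂ) - z))⁻¹) = univ := by
    ext x
    simp only [Function.mem_support, mem_univ, iff_true]
    exact inv_ne_zero (by simpa using fp_ne hz x)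
  rw [this]
  exact (Measure.measure_univ_pos).mpr hν

theorem fp_stT_diff (ν : Measure ℝ) [IsFiniteMeasure ν] {z w : ℂ} (hz : z.im ≠ 0)
    (hw : w.im ≠ 0) :
    ‖stT ν z - stT ν w‖ ^ 2 ≤ ‖z - w‖ ^ 2 * (Ifun ν z * Ifun ν w) := by
  have h1 : stT ν z - stT ν w = ∫ x : ℝ, (z - w) * (((x : ℂ) - z)⁻¹ * ((x : ℂ) - w)⁻¹) ∂ν := by
    unfold stT
    rw [← integral_sub (fp_int ν hz) (fp_int ν hw)]
    congr 1; ext x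
    have := fp_ne hz x
    have := fp_ne hw x
    field_simp
    ring
  have h2 : ‖stT ν z - stT ν w‖ ≤ ‖z - w‖ * ∫ x : ℝ, ‖((x : ℂ) - z)⁻¹‖ * ‖((x : ℂ) - w)⁻¹‖ ∂ν := by
    rw [h1]
    refine (norm_integral_le_integral_norm _).trans ?_
    rw [← integral_const_mul]
    simp only [norm_mul]
    exact le_rfl
  have e : ∀ (z : ℂ) (x : ℝ), ‖((x : ℂ) - z)⁻¹‖ ^ 2 = (Complex.normSq ((x : ℂ) - z))⁻¹ := by
    intro z x
    rw [norm_inv, Complex.normSq_eq_norm_sq, inv_pow]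
  have h3 := fp_cs ν (fun x => ‖((x : ℂ) - z)⁻¹‖) (fun x => ‖((x : ℂ) - w)⁻¹‖)
    (by simp only [e]; exact fp_int_sq ν hz) (by simp only [e]; exact fp_int_sq ν hw)
    (by
      refine (fp_int ν hz).norm.mul_bdd (c := |w.im|⁻¹) ((fp_meas w).norm.aestronglyMeasurable) ?_
      refine Eventually.of_forall fun x => ?_
      rw [norm_norm, norm_inv]
      exact inv_anti₀ (abs_pos.mpr hw) (fp_norm_ge x))
  simp only [e] at h3
  calc ‖stT ν z - stT ν w‖ ^ 2 ≤ (‖z - w‖ * ∫ x : ℝ, ‖((x : ℂ) - z)⁻¹‖ * ‖((x : ℂ) - w)⁻¹‖ ∂ν) ^ 2 := by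
        gcongr
    _ ≤ _ := by
      rw [mul_pow]
      gcongr
      exact h3

/-- The ratio `Im F / Im z`. -/
noncomputable def fpJ (μ : Measure ℝ) (z : ℂ) : ℝ := (nrT μ z).im / z.im

theorem fp_stT_im_pos (ν : Measure ℝ) [IsFiniteMeasure ν] (hν : ν ≠ 0) {z : ℂ} (hz : 0 < z.im) :
    0 < (stT ν z).im := by
  rw [fp_stT_im ν hz.ne']
  exact mul_pos hz (fp_Ifun_pos ν hν hz.ne')

theorem fp_stT_im_nonneg (ν : Measure ℝ) [IsFiniteMeasure ν] {z : ℂ} (hz : 0 < z.im) :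
    0 ≤ (stT ν z).im := by
  rw [fp_stT_im ν hz.ne']
  exact mul_nonneg hz.le (fp_Ifun_nonneg ν z)

theorem fp_stT_ne (ν : Measure ℝ) [IsProbabilityMeasure ν] {z : ℂ} (hz : 0 < z.im) :
    stT ν z ≠ 0 := by
  intro h
  have := fp_stT_im_pos ν (IsProbabilityMeasure.ne_zero ν) hz
  rw [h] at this
  simp at this

theorem fp_J_eq (μ : Measure ℝ) [IsProbabilityMeasure μ] {z : ℂ} (hz : 0 < z.im) :
    fpJ μ z = Ifun μ z / ‖stT μ z‖ ^ 2 := by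
  unfold fpJ nrT
  rw [Complex.neg_im, Complex.inv_im, fp_stT_im μ hz.ne', Complex.normSq_eq_norm_sq]
  field_simp

theorem fp_J_nonneg (μ : Measure ℝ) [IsProbabilityMeasure μ] {z : ℂ} (hz : 0 < z.im) :
    0 ≤ fpJ μ z := by
  rw [fp_J_eq μ hz]
  have := fp_Ifun_nonneg μ z
  positivity

theorem fp_nrT_im_pos (μ : Measure ℝ) [IsProbabilityMeasure μ] {z : ℂ} (hz : 0 < z.im) :
    0 < (nrT μ z).im := by
  unfold nrT
  rw [Complex.neg_im, Complex.inv_im, neg_div, neg_neg]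
  exact div_pos (fp_stT_im_pos μ (IsProbabilityMeasure.ne_zero μ) hz)
    (Complex.normSq_pos.mpr (fp_stT_ne μ hz))

/-- Schwarz-Pick inequality. -/
theorem fp_SP (μ : Measure ℝ) [IsProbabilityMeasure μ] {z w : ℂ} (hz : 0 < z.im) (hw : 0 < w.im) :
    ‖nrT μ z - nrT μ w‖ ^ 2 ≤ ‖z - w‖ ^ 2 * (fpJ μ z * fpJ μ w) := by
  have hz0 := fp_stT_ne μ hz
  have hw0 := fp_stT_ne μ hw
  have h1 : nrT μ z - nrT μ w = (stT μ z - stT μ w) / (stT μ z * stT μ w) := by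
    unfold nrT
    field_simp
    ring
  rw [fp_J_eq μ hz, fp_J_eq μ hw, h1, norm_div, div_pow, norm_mul, div_mul_div_comm, ← mul_pow,
    ← mul_div_assoc]
  gcongr
  exact fp_stT_diff μ hz.ne' hw.ne'

theorem fp_atom_lim (ν : Measure ℝ) [IsFiniteMeasure ν] (w : ℝ) {ι : Type*} {l : Filter ι}
    [l.IsCountablyGenerated]
    (u : ι → ℂ) (C : ℝ) (hu : Tendsto u l (𝓝 0)) (hpos : ∀ᶠ i in l, 0 < (u i).im)
    (hnt : ∀ᶠ i in l, ‖u i‖ ≤ C * (u i).im) :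
    Tendsto (fun i => u i * stT ν (w + u i)) l (𝓝 (-(ν.real {w} : ℂ))) := by
  have e1 : ∀ i, u i * stT ν (w + u i) = ∫ x : ℝ, u i * ((x : ℂ) - (w + u i))⁻¹ ∂ν := by
    intro i
    unfold stT
    rw [integral_const_mul]
  have e2 : (-(ν.real {w} : ℂ)) = ∫ x : ℝ, ({w} : Set ℝ).indicator (fun _ => (-1 : ℂ)) x ∂ν := by
    rw [integral_indicator (measurableSet_singleton w)]
    simp [Measure.real]
  simp only [e1]
  rw [e2]
  refine tendsto_integral_filter_of_dominated_convergence (fun _ => C) ?_ ?_ (integrable_const _) ?_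
  · exact Eventually.of_forall fun i => ((fp_meas _).const_mul _).aestronglyMeasurable
  · filter_upwards [hpos, hnt] with i h1 h2
    refine Eventually.of_forall fun x => ?_
    rw [norm_mul, norm_inv, ← div_eq_mul_inv]
    have h3 := fp_norm_ge (z := w + u i) x
    have h4 : ((w : ℂ) + u i).im = (u i).im := by simp
    rw [h4, abs_of_pos h1] at h3
    have hC : 0 ≤ C := by
      by_contra hC
      push Not at hC
      have := norm_nonneg (u i)
      nlinarith
    rw [div_le_iff₀ (lt_of_lt_of_le h1 h3)]
    exact h2.trans (by gcongr)
  · refine Eventually.of_forall fun x => ?_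
    by_cases hx : x = w
    · subst hx
      simp only [mem_singleton_iff, indicator_of_mem]
      refine tendsto_const_nhds.congr' ?_
      filter_upwards [hpos] with i h1
      have : u i ≠ 0 := by
        intro h; rw [h] at h1; simp at h1
      rw [sub_add_cancel_left, inv_neg, mul_neg, mul_inv_cancel₀ this]
    · simp only [mem_singleton_iff, hx, not_false_eq_true, indicator_of_notMem]
      have hx' : (x : ℂ) - w ≠ 0 := by
        rw [← Complex.ofReal_sub]; exact_mod_cast sub_ne_zero.mpr hx
      have h1 : Tendsto (fun i => (x : ℂ) - (w + u i)) l (𝓝 ((x : ℂ) - (w + 0))) :=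
        tendsto_const_nhds.sub (tendsto_const_nhds.add hu)
      have := hu.mul (h1.inv₀ (by simpa using hx'))
      simpa using this

/-- vertical approach -/
theorem fp_atom_vert (ν : Measure ℝ) [IsFiniteMeasure ν] (w : ℝ) :
    Tendsto (fun η : ℝ => ((η : ℂ) * Complex.I) * stT ν (w + (η : ℂ) * Complex.I)) (𝓝[>] 0)
      (𝓝 (-(ν.real {w} : ℂ))) := by
  refine fp_atom_lim ν w (fun η : ℝ => (η : ℂ) * Complex.I) 1 ?_ ?_ ?_
  · have : Tendsto (fun η : ℝ => (η : ℂ) * Complex.I) (𝓝 0) (𝓝 (((0 : ℝ) : ℂ) * Complex.I)) := by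
      apply Continuous.tendsto; fun_prop
    simpa using this.mono_left nhdsWithin_le_nhds
  · filter_upwards [self_mem_nhdsWithin] with η hη
    simpa using hη
  · filter_upwards [self_mem_nhdsWithin] with η hη
    have : (0 : ℝ) < η := hη
    simp [abs_of_pos this]


theorem fp_path (e : ℝ) : Tendsto (fun η : ℝ => (e : ℂ) + (η : ℂ) * Complex.I) (𝓝[>] 0) (𝓝 (e : ℂ)) := by
  have : Tendsto (fun η : ℝ => (e : ℂ) + (η : ℂ) * Complex.I) (𝓝 0)
      (𝓝 ((e : ℂ) + ((0 : ℝ) : ℂ) * Complex.I)) := by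
    apply Continuous.tendsto; fun_prop
  simpa using this.mono_left nhdsWithin_le_nhds

theorem fp_im (e η : ℝ) : ((e : ℂ) + (η : ℂ) * Complex.I).im = η := by simp

theorem fp_ev_pos : ∀ᶠ η : ℝ in 𝓝[>] 0, 0 < η := self_mem_nhdsWithin

theorem fp_om_tend {μ : Measure ℝ} {t : ℝ} {ω : ℂ → ℂ} (hω : IsSubordT μ t ω) (e : ℝ) :
    Tendsto (fun η : ℝ => ω ((e : ℂ) + (η : ℂ) * Complex.I)) (𝓝[>] 0) (𝓝 (ω e)) := by
  have h1 : ContinuousWithinAt ω CUHP (e : ℂ) := hω.cont _ (by simp [CUHP])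
  refine h1.tendsto.comp (tendsto_nhdsWithin_iff.mpr ⟨fp_path e, ?_⟩)
  filter_upwards [fp_ev_pos] with η hη
  simp [CUHP, hη.le]

theorem fp_om_pos {μ : Measure ℝ} {t : ℝ} {ω : ℂ → ℂ} (hω : IsSubordT μ t ω) {z : ℂ}
    (hz : 0 < z.im) : 0 < (ω z).im := hω.maps z hz

theorem fp_om_real_nonneg {μ : Measure ℝ} {t : ℝ} {ω : ℂ → ℂ} (hω : IsSubordT μ t ω) (e : ℝ) :
    0 ≤ (ω e).im := by
  have h := (Complex.continuous_im.tendsto _).comp (fp_om_tend hω e)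
  refine ge_of_tendsto h ?_
  filter_upwards [fp_ev_pos] with η hη
  exact (fp_om_pos hω (by rw [fp_im]; exact hη)).le

theorem fp_F_eq {μ : Measure ℝ} {t : ℝ} (ht : 1 < t) {ω : ℂ → ℂ} (hω : IsSubordT μ t ω) {z : ℂ}
    (hz : 0 < z.im) : nrT μ (ω z) = (t * ω z - z) / (t - 1) := by
  have h1 : (t : ℂ) - 1 ≠ 0 := by
    have : t - 1 ≠ 0 := by linarith
    exact_mod_cast this
  rw [hω.eqn z hz]
  field_simp

theorem fp_J_lt {μ : Measure ℝ} {t : ℝ} (ht : 1 < t) {ω : ℂ → ℂ} (hω : IsSubordT μ t ω) {z : ℂ}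
    (hz : 0 < z.im) : fpJ μ (ω z) < t / (t - 1) := by
  have h := congrArg Complex.im (hω.eqn z hz)
  have h1 : (((t : ℂ) - 1) * nrT μ (ω z)).im = (t - 1) * (nrT μ (ω z)).im := by
    simp
  rw [h1] at h
  have h2 : ((t : ℂ) * ω z - z).im = t * (ω z).im - z.im := by simp
  rw [h2] at h
  have h3 := fp_om_pos hω hz
  unfold fpJ
  rw [div_lt_div_iff₀ h3 (by linarith)]
  nlinarith

theorem fp_uniq {μ : Measure ℝ} [IsProbabilityMeasure μ] {t : ℝ} (ht : 1 < t) {ω : ℂ → ℂ}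
    (hω : IsSubordT μ t ω) {v : ℂ} (hv : 0 < v.im) (hJ : fpJ μ v < t / (t - 1)) :
    0 < (t * v - (t - 1) * nrT μ v).im ∧ ω (t * v - (t - 1) * nrT μ v) = v := by
  have ht1 : 0 < t - 1 := by linarith
  have hpos : 0 < (t * v - (t - 1) * nrT μ v).im := by
    have h1 : (t * v - (t - 1) * nrT μ v).im = t * v.im - (t - 1) * (nrT μ v).im := by simp
    rw [h1]
    unfold fpJ at hJ
    rw [div_lt_div_iff₀ hv (by linarith)] at hJ
    linarith
  refine ⟨hpos, ?_⟩
  set z := t * v - (t - 1) * nrT μ v with hzdef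
  by_contra hne
  have hv' := fp_om_pos hω hpos
  have h1 := fp_SP μ hv' hv
  have hJ' := fp_J_lt ht hω hpos
  have h2 := hω.eqn z hpos
  have h3 : (t : ℂ) * (ω z - v) = ((t - 1 : ℝ) : ℂ) * (nrT μ (ω z) - nrT μ v) := by
    rw [hzdef] at h2 ⊢
    push_cast
    linear_combination h2
  have h4 : t * ‖ω z - v‖ = (t - 1) * ‖nrT μ (ω z) - nrT μ v‖ := by
    have := congrArg norm h3
    rw [norm_mul, norm_mul, Complex.norm_real, Complex.norm_real] at this
    rw [Real.norm_of_nonneg (by linarith), Real.norm_of_nonneg ht1.le] at this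
    exact this
  have h5 : 0 < ‖ω z - v‖ := norm_pos_iff.mpr (sub_ne_zero.mpr hne)
  have h6 : fpJ μ (ω z) * fpJ μ v < (t / (t - 1)) * (t / (t - 1)) :=
    mul_lt_mul'' hJ' hJ (fp_J_nonneg μ hv') (fp_J_nonneg μ hv)
  have h7 : ‖nrT μ (ω z) - nrT μ v‖ = t / (t - 1) * ‖ω z - v‖ := by
    field_simp
    linarith
  rw [h7] at h1
  have : ‖ω z - v‖ ^ 2 * (fpJ μ (ω z) * fpJ μ v) < ‖ω z - v‖ ^ 2 * ((t / (t - 1)) * (t / (t - 1))) := by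
    gcongr
  nlinarith

theorem fp_F_tend {μ : Measure ℝ} {t : ℝ} (ht : 1 < t) {ω : ℂ → ℂ} (hω : IsSubordT μ t ω) (e : ℝ) :
    Tendsto (fun η : ℝ => nrT μ (ω ((e : ℂ) + (η : ℂ) * Complex.I))) (𝓝[>] 0)
      (𝓝 ((t * ω e - e) / (t - 1))) := by
  have h1 := (((fp_om_tend hω e).const_mul (t : ℂ)).sub (fp_path e)).div_const ((t : ℂ) - 1)
  refine h1.congr' ?_
  filter_upwards [fp_ev_pos] with η hη
  rw [fp_F_eq ht hω (by rw [fp_im]; exact hη)]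

theorem fp_C0 {μ : Measure ℝ} [IsProbabilityMeasure μ] {t : ℝ} (ht : 1 < t) {ω : ℂ → ℂ}
    (hω : IsSubordT μ t ω) (e : ℝ) {v : ℂ} (hv : 0 < v.im) :
    ‖nrT μ v - (t * ω e - e) / (t - 1)‖ ^ 2 ≤ ‖v - ω e‖ ^ 2 * (fpJ μ v * (t / (t - 1))) := by
  have h1 : Tendsto (fun η : ℝ => ‖nrT μ v - nrT μ (ω ((e : ℂ) + (η : ℂ) * Complex.I))‖ ^ 2) (𝓝[>] 0)
      (𝓝 (‖nrT μ v - (t * ω e - e) / (t - 1)‖ ^ 2)) :=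
    ((tendsto_const_nhds.sub (fp_F_tend ht hω e)).norm).pow 2
  have h2 : Tendsto (fun η : ℝ => ‖v - ω ((e : ℂ) + (η : ℂ) * Complex.I)‖ ^ 2 * (fpJ μ v * (t / (t - 1))))
      (𝓝[>] 0) (𝓝 (‖v - ω e‖ ^ 2 * (fpJ μ v * (t / (t - 1))))) :=
    (((tendsto_const_nhds.sub (fp_om_tend hω e)).norm).pow 2).mul_const _
  refine le_of_tendsto_of_tendsto h1 h2 ?_
  filter_upwards [fp_ev_pos] with η hη
  have hz : 0 < ((e : ℂ) + (η : ℂ) * Complex.I).im := by rw [fp_im]; exact hη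
  refine (fp_SP μ hv (fp_om_pos hω hz)).trans ?_
  have := (fp_J_lt ht hω hz).le
  have := fp_J_nonneg μ hv
  gcongr

theorem fp_C {μ : Measure ℝ} [IsProbabilityMeasure μ] {t : ℝ} (ht : 1 < t) {ω : ℂ → ℂ}
    (hω : IsSubordT μ t ω) {e r : ℝ} (hr : ω e = r) {η : ℝ} (hη : 0 < η) :
    ‖nrT μ (r + η * Complex.I) - ((t * r - e) / (t - 1) : ℝ)‖ ≤ t / (t - 1) * η ∧
    fpJ μ (r + η * Complex.I) ≤ t / (t - 1) := by
  have hv : 0 < ((r : ℂ) + (η : ℂ) * Complex.I).im := by rw [fp_im]; exact hη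
  have h := fp_C0 ht hω e hv
  have hc : 0 < t / (t - 1) := div_pos (by linarith) (by linarith)
  rw [hr] at h
  have e1 : ((t : ℂ) * r - e) / (t - 1) = (((t * r - e) / (t - 1) : ℝ) : ℂ) := by push_cast; rfl
  rw [e1] at h
  set N := ‖nrT μ (r + η * Complex.I) - ((t * r - e) / (t - 1) : ℝ)‖ with hN
  have e2 : ‖(r : ℂ) + η * Complex.I - r‖ = η := by
    rw [add_sub_cancel_left, norm_mul, Complex.norm_I, Complex.norm_real, mul_one,
      Real.norm_of_nonneg hη.le]
  rw [e2] at h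
  have hJ : fpJ μ (r + η * Complex.I) ≤ N / η := by
    unfold fpJ
    rw [fp_im]
    gcongr
    have := Complex.abs_im_le_norm (nrT μ (r + η * Complex.I) - ((t * r - e) / (t - 1) : ℝ))
    rw [Complex.sub_im, Complex.ofReal_im, sub_zero] at this
    exact (le_abs_self _).trans this
  have hN0 : 0 ≤ N := norm_nonneg _
  have h1 : N ≤ t / (t - 1) * η := by
    have h3 : N ^ 2 ≤ η ^ 2 * (N / η * (t / (t - 1))) := h.trans (by gcongr)
    have h4 : η ^ 2 * (N / η * (t / (t - 1))) = N * (t / (t - 1) * η) := by field_simp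
    rw [h4] at h3
    by_contra hcon
    push Not at hcon
    have : 0 < N := lt_of_le_of_lt (by positivity) hcon
    nlinarith
  refine ⟨h1, hJ.trans ?_⟩
  rw [div_le_iff₀ hη]
  exact h1

theorem fp_C2 {μ : Measure ℝ} [IsProbabilityMeasure μ] {t : ℝ} (ht : 1 < t) {ω : ℂ → ℂ}
    (hω : IsSubordT μ t ω) {e r e' r' : ℝ} (hr : ω e = r) (hr' : ω e' = r') (hee : e < e') :
    r < r' := by
  have ht1 : 0 < t - 1 := by linarith
  have hc : 0 < t / (t - 1) := div_pos (by linarith) (by linarith)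
  have h1 : Tendsto (fun η : ℝ => ‖nrT μ (ω ((e' : ℂ) + (η : ℂ) * Complex.I)) - (t * ω e - e) / (t - 1)‖ ^ 2) (𝓝[>] 0)
      (𝓝 (‖(t * ω e' - e') / (t - 1) - (t * ω e - e) / (t - 1)‖ ^ 2)) :=
    (((fp_F_tend ht hω e').sub tendsto_const_nhds).norm).pow 2
  have h2 : Tendsto (fun η : ℝ => ‖ω ((e' : ℂ) + (η : ℂ) * Complex.I) - ω e‖ ^ 2 * ((t / (t - 1)) * (t / (t - 1))))
      (𝓝[>] 0) (𝓝 (‖ω e' - ω e‖ ^ 2 * ((t / (t - 1)) * (t / (t - 1))))) :=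
    ((((fp_om_tend hω e').sub tendsto_const_nhds).norm).pow 2).mul_const _
  have h3 := le_of_tendsto_of_tendsto h1 h2 (by
    filter_upwards [fp_ev_pos] with η hη
    have hz : 0 < ((e' : ℂ) + (η : ℂ) * Complex.I).im := by rw [fp_im]; exact hη
    refine (fp_C0 ht hω e (fp_om_pos hω hz)).trans ?_
    have := (fp_J_lt ht hω hz).le
    gcongr)
  rw [hr, hr'] at h3
  have e1 : ((t : ℂ) * r' - e') / (t - 1) - ((t : ℂ) * r - e) / (t - 1)
      = (((t * (r' - r) - (e' - e)) / (t - 1) : ℝ) : ℂ) := by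
    push_cast; ring
  rw [e1, Complex.norm_real, ← Complex.ofReal_sub, Complex.norm_real] at h3
  simp only [Real.norm_eq_abs, sq_abs] at h3
  have h4 : (t * (r' - r) - (e' - e)) ^ 2 ≤ (t * (r' - r)) ^ 2 := by
    rw [div_pow, div_le_iff₀ (by positivity)] at h3
    have : (r' - r) ^ 2 * (t / (t - 1) * (t / (t - 1))) * (t - 1) ^ 2 = (t * (r' - r)) ^ 2 := by
      field_simp
    linarith
  by_contra hcon
  push Not at hcon
  nlinarith [mul_nonneg (by linarith : (0 : ℝ) ≤ t) (by linarith : 0 ≤ r - r'), mul_nonneg (mul_nonneg (by linarith : (0 : ℝ) ≤ t) (by linarith : 0 ≤ r - r')) (by linarith : 0 ≤ e' - e)]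

/-- the Cauchy-Stieltjes transform of the free power -/
theorem fp_M {μ μt : Measure ℝ} {t : ℝ} (ht : 1 < t) {ω : ℂ → ℂ}
    (hω : IsSubordT μ t ω) (hμt : IsFreePow μ ω μt) {z : ℂ} (hz : 0 < z.im) :
    stT μt z = -(t - 1) / (t * ω z - z) := by
  rw [hμt.2 z hz]
  have h := hω.eqn z hz
  rw [h]
  have h1 : (t : ℂ) - 1 ≠ 0 := by
    have : t - 1 ≠ 0 := by linarith
    exact_mod_cast this
  unfold nrT
  by_cases h0 : stT μ (ω z) = 0
  · simp [h0]
  · field_simp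

theorem fp_M_tend {μ μt : Measure ℝ} {t : ℝ} (ht : 1 < t) {ω : ℂ → ℂ}
    (hω : IsSubordT μ t ω) (hμt : IsFreePow μ ω μt) (e : ℝ) (he : t * ω e - e ≠ 0) :
    Tendsto (fun η : ℝ => stT μt ((e : ℂ) + (η : ℂ) * Complex.I)) (𝓝[>] 0)
      (𝓝 (-(t - 1) / (t * ω e - e))) := by
  have h1 := (((fp_om_tend hω e).const_mul (t : ℂ)).sub (fp_path e)).inv₀ he
  have h2 := h1.const_mul (-((t : ℂ) - 1))
  rw [div_eq_mul_inv]
  refine h2.congr' ?_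
  filter_upwards [fp_ev_pos] with η hη
  rw [fp_M ht hω hμt (by rw [fp_im]; exact hη), div_eq_mul_inv]

theorem fp_dec (μ : Measure ℝ) [IsFiniteMeasure μ] (w : ℝ) {z : ℂ} (hz : 0 < z.im) :
    stT μ z = μ.real {w} * ((w : ℂ) - z)⁻¹ + stT (μ.restrict {w}ᶜ) z := by
  unfold stT
  rw [← integral_add_compl (measurableSet_singleton w) (fp_int μ hz.ne')]
  congr 1
  rw [integral_singleton]
  simp

/-- heavy atoms are on the boundary curve -/
theorem fp_heavy {μ : Measure ℝ} [IsProbabilityMeasure μ] {t : ℝ} (ht : 1 < t) {ω : ℂ → ℂ}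
    (hω : IsSubordT μ t ω) (w : ℝ) (hw : 1 - 1 / t ≤ μ.real {w})
    (hne : μ.restrict {w}ᶜ ≠ 0) : ω ((t * w : ℝ)) = w := by
  have ht0 : 0 < t := by linarith
  have ht1 : 0 < t - 1 := by linarith
  have hp : 0 < μ.real {w} := lt_of_lt_of_le (by rw [sub_pos, div_lt_one ht0]; exact ht) hw
  have hdec := fun z hz => fp_dec μ w (z := z) hz
  have hnorm : ∀ η : ℝ, 0 < η → μ.real {w} / η < ‖stT μ (w + η * Complex.I)‖ := by
    intro η hη
    have hz : 0 < ((w : ℂ) + (η : ℂ) * Complex.I).im := by rw [fp_im]; exact hη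
    have h1 := fp_stT_im_pos (μ.restrict {w}ᶜ) hne hz
    have h2 := hdec _ hz
    have h3 := congrArg Complex.im h2
    have e1 : (μ.real {w} * ((w : ℂ) - (w + η * Complex.I))⁻¹) = ((μ.real {w} / η : ℝ) : ℂ) * Complex.I := by
      have : (η : ℂ) ≠ 0 := by exact_mod_cast hη.ne'
      rw [sub_add_cancel_left, inv_neg, mul_inv, Complex.inv_I]
      push_cast
      field_simp
    rw [Complex.add_im, e1, Complex.im_ofReal_mul, Complex.I_im, mul_one] at h3
    have h4 := (le_abs_self _).trans (Complex.abs_im_le_norm (stT μ (w + η * Complex.I)))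
    linarith
  have hF : ∀ η : ℝ, 0 < η → ‖nrT μ (w + η * Complex.I)‖ < η / μ.real {w} := by
    intro η hη
    unfold nrT
    rw [norm_neg, norm_inv]
    have := inv_strictAnti₀ (by positivity) (hnorm η hη)
    rwa [inv_div] at this
  have hH : Tendsto (fun η : ℝ => t * ((w : ℂ) + η * Complex.I) - (t - 1) * nrT μ (w + η * Complex.I))
      (𝓝[>] 0) (𝓝 ((t * w : ℝ) : ℂ)) := by
    have h0 : Tendsto (fun η : ℝ => nrT μ (w + η * Complex.I)) (𝓝[>] 0) (𝓝 0) := by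
      rw [tendsto_zero_iff_norm_tendsto_zero]
      have h1 : Tendsto (fun η : ℝ => η / μ.real {w}) (𝓝[>] 0) (𝓝 0) := by
        have : Tendsto (fun η : ℝ => η / μ.real {w}) (𝓝 0) (𝓝 (0 / μ.real {w})) :=
          tendsto_id.div_const _
        rw [zero_div] at this
        exact this.mono_left nhdsWithin_le_nhds
      refine squeeze_zero' (Eventually.of_forall fun _ => norm_nonneg _) ?_ h1
      filter_upwards [fp_ev_pos] with η hη
      exact (hF η hη).le
    have := ((fp_path w).const_mul (t : ℂ)).sub (h0.const_mul ((t : ℂ) - 1))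
    simpa using this
  have hu : ∀ η : ℝ, 0 < η → _ := fun η hη => fp_uniq ht hω (v := w + η * Complex.I)
    (by rw [fp_im]; exact hη) (by
      unfold fpJ
      rw [fp_im]
      have h1 := (le_abs_self _).trans (Complex.abs_im_le_norm (nrT μ (w + η * Complex.I)))
      have h2 := hF η hη
      have h3 : (nrT μ (w + η * Complex.I)).im / η < 1 / μ.real {w} := by
        rw [div_lt_iff₀ hη]
        calc _ < η / μ.real {w} := lt_of_le_of_lt h1 h2
          _ = _ := by ring
      refine lt_of_lt_of_le h3 ?_
      rw [div_le_div_iff₀ hp ht1]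
      have : 1 - 1 / t = (t - 1) / t := by field_simp
      rw [this, div_le_iff₀ ht0] at hw
      linarith)
  have h1 : ContinuousWithinAt ω CUHP ((t * w : ℝ) : ℂ) := hω.cont _ (by
    change 0 ≤ (((t * w : ℝ) : ℂ)).im
    rw [Complex.ofReal_im])
  have h2 := h1.tendsto.comp (tendsto_nhdsWithin_iff.mpr ⟨hH, by
    filter_upwards [fp_ev_pos] with η hη
    exact (hu η hη).1.le⟩)
  refine tendsto_nhds_unique h2 ?_
  refine (fp_path w).congr' ?_
  filter_upwards [fp_ev_pos] with η hη
  exact (hu η hη).2.symm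


theorem fp_D_mass {μ : Measure ℝ} [IsProbabilityMeasure μ] {t : ℝ} (ht : 1 < t) {ω : ℂ → ℂ}
    (hω : IsSubordT μ t ω) {e w : ℝ} (hw : ω e = w) (hew : e = t * w) :
    1 - 1 / t ≤ μ.real {w} := by
  have ht0 : 0 < t := by linarith
  have ht1 : 0 < t - 1 := by linarith
  have h1 := (fp_atom_vert μ w).norm
  rw [norm_neg, Complex.norm_real, Real.norm_of_nonneg measureReal_nonneg] at h1
  refine ge_of_tendsto h1 ?_
  filter_upwards [fp_ev_pos] with η hη
  have h2 := (fp_C ht hω hw hη).1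
  rw [hew, sub_self, zero_div, Complex.ofReal_zero, sub_zero] at h2
  unfold nrT at h2
  rw [norm_neg, norm_inv] at h2
  have h3 : 0 < ‖stT μ (w + η * Complex.I)‖ :=
    norm_pos_iff.mpr (fp_stT_ne μ (by rw [fp_im]; exact hη))
  rw [norm_mul, norm_mul, Complex.norm_I, Complex.norm_real, mul_one, Real.norm_of_nonneg hη.le]
  rw [inv_le_iff_one_le_mul₀ h3] at h2
  have h4 : t / (t - 1) * η * ‖stT μ (w + η * Complex.I)‖ = t / (t - 1) * (η * ‖stT μ (w + η * Complex.I)‖) := by ring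
  rw [h4, div_mul_eq_mul_div, le_div_iff₀ ht1] at h2
  have : 1 - 1 / t = (t - 1) / t := by field_simp
  rw [this, div_le_iff₀ ht0]
  linarith

theorem fp_D_key {μ μt : Measure ℝ} [IsProbabilityMeasure μ] {t : ℝ} (ht : 1 < t) {ω : ℂ → ℂ}
    (hω : IsSubordT μ t ω) (hμt : IsFreePow μ ω μt) {e w : ℝ} (hw : ω e = w) (hew : e = t * w)
    {η : ℝ} (hη : 0 < η) {Q : ℂ}
    (hQ : Q = t * ω (e + η * Complex.I) - (e + η * Complex.I)) :
    (t - 1) * η ≤ Q.im ∧ Q.re ^ 2 ≤ Q.im * (Q.im + η) := by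
  have ht0 : 0 < t := by linarith
  have ht1 : 0 < t - 1 := by linarith
  have hz : 0 < ((e : ℂ) + (η : ℂ) * Complex.I).im := by rw [fp_im]; exact hη
  set z := (e : ℂ) + (η : ℂ) * Complex.I with hzd
  have hωz := fp_om_pos hω hz
  have hb : (t - 1) * η ≤ Q.im := by
    have h1 := hω.imLe z hz
    have h2 : Q.im = t * (ω z).im - z.im := by rw [hQ]; simp
    have h3 : z.im = η := fp_im e η
    rw [h2]
    nlinarith
  refine ⟨hb, ?_⟩
  have hp := fp_D_mass ht hω hw hew
  set p := μ.real {w}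
  have h1 := fp_dec μ w hωz
  rw [← hμt.2 z hz, fp_M ht hω hμt hz, ← hQ] at h1
  have hg := fp_stT_im_nonneg (μ.restrict {w}ᶜ) hωz
  have hu : (w : ℂ) - ω z = -(Q + η * Complex.I) / t := by
    have : (t : ℂ) ≠ 0 := by exact_mod_cast ht0.ne'
    rw [hQ, hzd, hew]
    field_simp
    push_cast
    ring
  have h2 : (stT (μ.restrict {w}ᶜ) (ω z)) = ((-(t - 1) : ℝ) : ℂ) * Q⁻¹ + ((p * t : ℝ) : ℂ) * (Q + η * Complex.I)⁻¹ := by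
    rw [hu] at h1
    have : stT (μ.restrict {w}ᶜ) (ω z) = -(t - 1) / Q - p * (-(Q + η * Complex.I) / t)⁻¹ := by
      rw [h1]; ring
    rw [this, inv_div, div_neg]
    push_cast
    ring
  rw [h2, Complex.add_im, Complex.im_ofReal_mul, Complex.im_ofReal_mul, Complex.inv_im, Complex.inv_im,
    Complex.normSq_apply, Complex.normSq_apply] at hg
  have e1 : (Q + η * Complex.I).im = Q.im + η := by simp
  have e2 : (Q + η * Complex.I).re = Q.re := by simp
  rw [e1, e2] at hg
  set a := Q.re
  set b := Q.im
  have hb0 : 0 < b := lt_of_lt_of_le (by positivity) hb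
  have hpt : t - 1 ≤ p * t := by
    have : 1 - 1 / t = (t - 1) / t := by field_simp
    rw [this, div_le_iff₀ ht0] at hp
    exact hp
  have h3 : p * t * ((b + η) / (a * a + (b + η) * (b + η))) ≤ (t - 1) * (b / (a * a + b * b)) := by
    have : -(t - 1) * (-b / (a * a + b * b)) + p * t * (-(b + η) / (a * a + (b + η) * (b + η)))
       = (t - 1) * (b / (a * a + b * b)) - p * t * ((b + η) / (a * a + (b + η) * (b + η))) := by ring
    linarith
  have hd1 : 0 < a * a + (b + η) * (b + η) := by
    have := mul_self_nonneg a
    positivity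
  have hd2 : 0 < a * a + b * b := by
    have := mul_self_nonneg a
    positivity
  have h4 : (t - 1) * ((b + η) / (a * a + (b + η) * (b + η))) ≤ (t - 1) * (b / (a * a + b * b)) :=
    le_trans (mul_le_mul_of_nonneg_right hpt (by positivity)) h3
  have h5 := le_of_mul_le_mul_left h4 ht1
  rw [div_le_div_iff₀ hd1 hd2] at h5
  have : η * (a ^ 2) ≤ η * (b * (b + η)) := by nlinarith
  exact le_of_mul_le_mul_left this hη

theorem fp_Q_tend {μ : Measure ℝ} {t : ℝ} {ω : ℂ → ℂ}
    (hω : IsSubordT μ t ω) {e w : ℝ} (hw : ω e = w) (hew : e = t * w) :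
    Tendsto (fun η : ℝ => t * ω (e + η * Complex.I) - (e + η * Complex.I)) (𝓝[>] 0) (𝓝 0) := by
  have := ((fp_om_tend hω e).const_mul (t : ℂ)).sub (fp_path e)
  rw [hw] at this
  have h0 : (t : ℂ) * w - e = 0 := by rw [hew]; push_cast; ring
  rwa [h0] at this

theorem fp_D_div {μ μt : Measure ℝ} [IsProbabilityMeasure μ] {t : ℝ} (ht : 1 < t) {ω : ℂ → ℂ}
    (hω : IsSubordT μ t ω) (hμt : IsFreePow μ ω μt) {e w : ℝ} (hw : ω e = w) (hew : e = t * w) :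
    densityDivergesAt μt e := by
  have ht0 : 0 < t := by linarith
  have ht1 : 0 < t - 1 := by linarith
  unfold densityDivergesAt
  have h1 : Tendsto (fun η : ℝ => (t * ω (e + η * Complex.I) - (e + η * Complex.I)).im) (𝓝[>] 0) (𝓝[>] 0) := by
    refine tendsto_nhdsWithin_iff.mpr ⟨?_, ?_⟩
    · have := (Complex.continuous_im.tendsto _).comp (fp_Q_tend hω hw hew)
      rw [Complex.zero_im] at this
      exact this
    · filter_upwards [fp_ev_pos] with η hη
      exact lt_of_lt_of_le (by positivity) (fp_D_key ht hω hμt hw hew hη rfl).1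
  have h2 := (tendsto_inv_nhdsGT_zero.comp h1).const_mul_atTop
    (show 0 < (t - 1) / (2 + 1 / (t - 1)) by positivity)
  refine tendsto_atTop_mono' _ ?_ h2
  filter_upwards [fp_ev_pos] with η hη
  have hz : 0 < ((e : ℂ) + (η : ℂ) * Complex.I).im := by rw [fp_im]; exact hη
  obtain ⟨k1, k2⟩ := fp_D_key ht hω hμt hw hew hη rfl
  rw [fp_M ht hω hμt hz]
  simp only [Function.comp]
  set Q := (t : ℂ) * ω (e + η * Complex.I) - (e + η * Complex.I)
  have e1 : -((t : ℂ) - 1) / Q = ((-(t - 1) : ℝ) : ℂ) * Q⁻¹ := by push_cast; ring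
  rw [e1, Complex.im_ofReal_mul, Complex.inv_im, Complex.normSq_apply]
  have hb0 : 0 < Q.im := lt_of_lt_of_le (by positivity) k1
  have k3 : Q.re * Q.re + Q.im * Q.im ≤ Q.im * Q.im * (2 + 1 / (t - 1)) := by
    have : η ≤ Q.im / (t - 1) := by rw [le_div_iff₀ ht1]; linarith
    have : Q.im * η ≤ Q.im * (Q.im / (t - 1)) := by gcongr
    have e : Q.im * Q.im * (2 + 1 / (t - 1)) = 2 * (Q.im * Q.im) + Q.im * (Q.im / (t - 1)) := by ring
    nlinarith
  have e2 : -(t - 1) * (-Q.im / (Q.re * Q.re + Q.im * Q.im)) = (t - 1) * (Q.im / (Q.re * Q.re + Q.im * Q.im)) := by ring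
  rw [e2]
  have e3 : (t - 1) / (2 + 1 / (t - 1)) * Q.im⁻¹ = (t - 1) * (Q.im / (Q.im * Q.im * (2 + 1 / (t - 1)))) := by
    field_simp
  rw [e3]
  have hd2 : 0 < Q.re * Q.re + Q.im * Q.im := by
    have := mul_self_nonneg Q.re
    positivity
  gcongr

theorem fp_D_atom {μ μt : Measure ℝ} [IsProbabilityMeasure μ] {t : ℝ} (ht : 1 < t) {ω : ℂ → ℂ}
    (hω : IsSubordT μ t ω) (hμt : IsFreePow μ ω μt) {e w : ℝ} (hw : ω e = w) (hew : e = t * w) :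
    μt.real {e} = t * μ.real {w} - (t - 1) := by
  have ht0 : 0 < t := by linarith
  have ht1 : 0 < t - 1 := by linarith
  haveI := hμt.1
  have h1 := fp_atom_vert μt e
  have hu : Tendsto (fun η : ℝ => ω (e + η * Complex.I) - w) (𝓝[>] 0) (𝓝 0) := by
    have := (fp_om_tend hω e).sub_const (w : ℂ)
    rwa [hw, sub_self] at this
  have h2 := fp_atom_lim μ w (fun η : ℝ => ω (e + η * Complex.I) - w) (2 + 1 / (t - 1)) hu
    (by
      filter_upwards [fp_ev_pos] with η hη
      have := fp_om_pos hω (z := (e : ℂ) + (η : ℂ) * Complex.I) (by rw [fp_im]; exact hη)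
      simpa using this)
    (by
      filter_upwards [fp_ev_pos] with η hη
      obtain ⟨k1, k2⟩ := fp_D_key ht hω hμt hw hew hη rfl
      set Q := (t : ℂ) * ω (e + η * Complex.I) - (e + η * Complex.I) with hQ
      have hb0 : 0 < Q.im := lt_of_lt_of_le (by positivity) k1
      have e0 : Q + η * Complex.I = t * (ω (e + η * Complex.I) - w) := by
        rw [hQ]; rw [hew]; push_cast; ring
      have r1 := congrArg Complex.re e0
      have i1 := congrArg Complex.im e0
      rw [Complex.re_ofReal_mul] at r1
      rw [Complex.im_ofReal_mul] at i1
      set u := ω (e + η * Complex.I) - w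
      simp at r1 i1
      have hui : 0 < u.im := by
        have : 0 < t * u.im := by rw [← i1]; positivity
        exact (pos_iff_pos_of_mul_pos this).mp ht0
      have hre : u.re ^ 2 ≤ u.im ^ 2 := by
        have : (t * u.re) ^ 2 ≤ (t * u.im) ^ 2 := by
          rw [← r1, ← i1]; nlinarith
        rw [mul_pow, mul_pow] at this
        exact le_of_mul_le_mul_left this (by positivity)
      have hre' := sq_le_sq.mp hre
      rw [abs_of_pos hui] at hre'
      have hn := Complex.norm_le_abs_re_add_abs_im u
      rw [abs_of_pos hui] at hn
      have : 0 < 1 / (t - 1) * u.im := by positivity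
      linarith)
  have h3 : Tendsto (fun η : ℝ => (ω (e + η * Complex.I) - w) * stT μ (w + (ω (e + η * Complex.I) - w)))
      (𝓝[>] 0) (𝓝 ((-(t - 1) + (-(μt.real {e} : ℂ))) / t)) := by
    refine ((h1.const_add (-((t : ℂ) - 1))).div_const (t : ℂ)).congr' ?_
    filter_upwards [fp_ev_pos] with η hη
    have hz : 0 < ((e : ℂ) + (η : ℂ) * Complex.I).im := by rw [fp_im]; exact hη
    obtain ⟨k1, k2⟩ := fp_D_key ht hω hμt hw hew hη rfl
    rw [add_sub_cancel, ← hμt.2 _ hz, fp_M ht hω hμt hz]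
    set Q := (t : ℂ) * ω (e + η * Complex.I) - (e + η * Complex.I) with hQ
    have hb0 : 0 < Q.im := lt_of_lt_of_le (by positivity) k1
    have hQ0 : Q ≠ 0 := by
      intro h; rw [h] at hb0; simp at hb0
    have e0 : ω (e + η * Complex.I) - w = (Q + η * Complex.I) / t := by
      have : (t : ℂ) ≠ 0 := by exact_mod_cast ht0.ne'
      rw [hQ]; rw [hew]; push_cast; field_simp; ring
    rw [e0]
    field_simp
    ring
  have h4 := tendsto_nhds_unique h2 h3
  have h5 : (-(μ.real {w})) = (-(t - 1) + (-(μt.real {e}))) / t := by exact_mod_cast h4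
  field_simp at h5
  linarith


theorem fp_S1 (ν : Measure ℝ) [IsFiniteMeasure ν] (x : ℝ) {η : ℝ} (hη : 0 < η) :
    ν.real (Metric.closedBall x η) ≤ 2 * η * (stT ν (x + η * Complex.I)).im := by
  have hz : 0 < ((x : ℂ) + (η : ℂ) * Complex.I).im := by rw [fp_im]; exact hη
  rw [fp_stT_im ν hz.ne', fp_im]
  have h1 : ν.real (Metric.closedBall x η) * (2 * η ^ 2)⁻¹ ≤ Ifun ν (x + η * Complex.I) := by
    have : ν.real (Metric.closedBall x η) * (2 * η ^ 2)⁻¹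
        = ∫ y in Metric.closedBall x η, (2 * η ^ 2)⁻¹ ∂ν := by simp
    rw [this]
    unfold Ifun
    refine (setIntegral_mono_on (integrable_const _).integrableOn (fp_int_sq ν hz.ne').integrableOn
      Metric.isClosed_closedBall.measurableSet ?_).trans
      (setIntegral_le_integral (fp_int_sq ν hz.ne')
        (Eventually.of_forall fun y => inv_nonneg.mpr (Complex.normSq_nonneg _)))
    intro y hy
    have hne := fp_ne hz.ne' y
    refine inv_anti₀ (Complex.normSq_pos.mpr hne) ?_
    rw [Complex.normSq_apply]
    simp
    rw [Metric.mem_closedBall, Real.dist_eq] at hy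
    have := sq_abs (y - x)
    have h0 := abs_nonneg (y - x)
    nlinarith
  rw [← div_eq_mul_inv, div_le_iff₀ (by positivity)] at h1
  nlinarith

theorem fp_S2 (ν : Measure ℝ) [IsFiniteMeasure ν] (s : Set ℝ) (C : NNReal)
    (h : ∀ x ∈ s, ∀ᶠ η : ℝ in 𝓝[>] 0, (stT ν (x + η * Complex.I)).im ≤ C) :
    ν s ≤ C * volume s := by
  have := VitaliFamily.measure_le_of_frequently_le (Besicovitch.vitaliFamily ν) (C • (volume : Measure ℝ))
    (Measure.AbsolutelyContinuous.refl ν) s (by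
      intro x hx
      have h1 : ∀ᶠ η : ℝ in 𝓝[>] 0, ν (Metric.closedBall x η) ≤ (C • (volume : Measure ℝ)) (Metric.closedBall x η) := by
        filter_upwards [h x hx, fp_ev_pos] with η h2 h3
        rw [Measure.smul_apply, Real.volume_closedBall, ENNReal.smul_def, smul_eq_mul,
          ← ofReal_measureReal, ← ENNReal.ofReal_coe_nnreal, ← ENNReal.ofReal_mul (NNReal.coe_nonneg C)]
        apply ENNReal.ofReal_le_ofReal
        have := fp_S1 ν x h3
        nlinarith
      exact (Besicovitch.tendsto_filterAt ν x).frequently h1.frequently)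
  rw [Measure.smul_apply, ENNReal.smul_def, smul_eq_mul] at this
  exact this

theorem fp_S4 (ν : Measure ℝ) [IsFiniteMeasure ν] {e ε : ℝ} (hε : 0 < ε)
    (h : ν (Ioo (e - ε) (e + ε)) = 0) : densityVanishesAt ν e := by
  unfold densityVanishesAt
  have hb : ∀ η : ℝ, 0 < η → (stT ν (e + η * Complex.I)).im ≤ η * (ν.real univ * (ε ^ 2)⁻¹) := by
    intro η hη
    have hz : 0 < ((e : ℂ) + (η : ℂ) * Complex.I).im := by rw [fp_im]; exact hη
    rw [fp_stT_im ν hz.ne', fp_im]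
    gcongr
    have : ν.real univ * (ε ^ 2)⁻¹ = ∫ y, (ε ^ 2)⁻¹ ∂ν := by simp
    rw [this]
    unfold Ifun
    refine integral_mono_ae (fp_int_sq ν hz.ne') (integrable_const _) ?_
    have hae : ∀ᵐ y ∂ν, y ∉ Ioo (e - ε) (e + ε) := measure_eq_zero_iff_ae_notMem.mp h
    filter_upwards [hae] with y hy
    apply inv_anti₀ (by positivity)
    rw [Complex.normSq_apply]
    simp
    have h1 : ε ≤ |y - e| := by
      by_contra hcon
      push Not at hcon
      rw [abs_lt] at hcon
      exact hy ⟨by linarith, by linarith⟩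
    have := sq_abs (y - e)
    nlinarith
  have h0 : Tendsto (fun η : ℝ => η * (ν.real univ * (ε ^ 2)⁻¹)) (𝓝[>] 0) (𝓝 0) := by
    have : Tendsto (fun η : ℝ => η * (ν.real univ * (ε ^ 2)⁻¹)) (𝓝 0) (𝓝 (0 * (ν.real univ * (ε ^ 2)⁻¹))) :=
      tendsto_id.mul_const _
    rw [zero_mul] at this
    exact this.mono_left nhdsWithin_le_nhds
  refine squeeze_zero' ?_ ?_ h0
  · filter_upwards [fp_ev_pos] with η hη
    exact fp_stT_im_nonneg ν (by rw [fp_im]; exact hη)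
  · filter_upwards [fp_ev_pos] with η hη
    exact hb η hη

theorem fp_S5 (ν : Measure ℝ) [IsFiniteMeasure ν] (s : Set ℝ) (hs : volume s ≠ ⊤)
    (h : ∀ x ∈ s, densityVanishesAt ν x) : ν s = 0 := by
  have h1 : ∀ ε : NNReal, 0 < ε → ν s ≤ ε * volume s := by
    intro ε hε
    refine fp_S2 ν s ε fun x hx => ?_
    have := h x hx
    unfold densityVanishesAt at this
    exact this.eventually_le_const (by exact_mod_cast hε)
  have h2 : Tendsto (fun ε : NNReal => (ε : ENNReal) * volume s) (𝓝[>] 0) (𝓝 0) := by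
    have h3 : Tendsto (fun ε : NNReal => (ε : ENNReal) * volume s) (𝓝 0) (𝓝 (((0 : NNReal) : ENNReal) * volume s)) :=
      ENNReal.Tendsto.mul_const (ENNReal.continuous_coe.tendsto 0) (Or.inr hs)
    simp only [ENNReal.coe_zero, zero_mul] at h3
    exact h3.mono_left nhdsWithin_le_nhds
  have h4 := ge_of_tendsto h2 (by
    filter_upwards [self_mem_nhdsWithin] with ε hε
    exact h1 ε hε)
  exact le_antisymm h4 bot_le

theorem fp_acPart_le (ν : Measure ℝ) : acPart ν ≤ ν := Measure.withDensity_rnDeriv_le ν volume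

theorem fp_decomp (ν : Measure ℝ) [IsFiniteMeasure ν] : ν = ν.singularPart volume + acPart ν :=
  Measure.haveLebesgueDecomposition_add ν volume

theorem fp_acPart_ac (ν : Measure ℝ) : acPart ν ≪ volume := withDensity_absolutelyContinuous _ _

theorem fp_om_cont {μ : Measure ℝ} {t : ℝ} {ω : ℂ → ℂ} (hω : IsSubordT μ t ω) :
    Continuous (fun e : ℝ => ω e) := by
  have h := hω.cont
  rw [continuous_iff_continuousAt]
  intro e
  have h1 : ContinuousWithinAt ω CUHP (e : ℂ) := h _ (by simp [CUHP])
  refine h1.tendsto.comp (tendsto_nhdsWithin_iff.mpr ⟨Complex.continuous_ofReal.tendsto e, ?_⟩)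
  exact Eventually.of_forall fun x => by simp [CUHP]

theorem fp_notMem_msupp {ν : Measure ℝ} {e : ℝ} (h : e ∉ msupp ν) :
    ∃ ε > 0, ν (Ioo (e - ε) (e + ε)) = 0 := by
  unfold msupp at h
  simp only [mem_ofPred_eq, not_forall, not_lt, nonpos_iff_eq_zero] at h
  obtain ⟨ε, h1, h2⟩ := h
  exact ⟨ε, h1, h2⟩

theorem fp_notMem_of_open {ν : Measure ℝ} {a b e : ℝ} (he : e ∈ Ioo a b) (h : ν (Ioo a b) = 0) :
    e ∉ msupp ν := by
  intro hm
  have h1 := hm (min (e - a) (b - e)) (lt_min (by linarith [he.1]) (by linarith [he.2]))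
  refine h1.ne' (measure_mono_null ?_ h)
  intro x hx
  have := min_le_left (e - a) (b - e)
  have := min_le_right (e - a) (b - e)
  exact ⟨by linarith [hx.1], by linarith [hx.2]⟩

theorem fp_A {μ μt : Measure ℝ} {t : ℝ} (ht : 1 < t) {ω : ℂ → ℂ}
    (hω : IsSubordT μ t ω) (hμt : IsFreePow μ ω μt) {e : ℝ} (he : (ω e).im ≠ 0) :
    e ∈ msupp (acPart μt) := by
  have ht0 : 0 < t := by linarith
  have ht1 : 0 < t - 1 := by linarith
  have := hμt.1
  have he0 : 0 < (ω e).im := lt_of_le_of_ne (fp_om_real_nonneg hω e) he.symm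
  by_contra hcon
  obtain ⟨ε, hε, h0⟩ := fp_notMem_msupp hcon
  have hQim : ∀ x : ℝ, ((t : ℂ) * ω x - x).im = t * (ω x).im := by intro x; simp
  have hQ0 : ∀ x : ℝ, 0 < (ω x).im → (t : ℂ) * ω x - x ≠ 0 := by
    intro x hx h
    have := hQim x
    rw [h, Complex.zero_im] at this
    have : 0 < t * (ω x).im := by positivity
    linarith
  -- uniform bound near e
  have hc1 : Continuous (fun x : ℝ => (t : ℂ) * ω x - x) :=
    (continuous_const.mul (fp_om_cont hω)).sub Complex.continuous_ofReal
  have hc2 : ContinuousAt (fun x : ℝ => ‖-((t : ℂ) - 1) / ((t : ℂ) * ω x - x)‖) e :=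
    (continuousAt_const.div hc1.continuousAt (hQ0 e he0)).norm
  set C : NNReal := ⟨‖-((t : ℂ) - 1) / ((t : ℂ) * ω e - e)‖ + 1, by positivity⟩ with hC
  have hev : ∀ᶠ x : ℝ in 𝓝 e, ‖-((t : ℂ) - 1) / ((t : ℂ) * ω x - x)‖ < C ∧ 0 < (ω x).im := by
    refine (hc2.eventually_lt_const ?_).and ?_
    · rw [hC]; change _ < _ + 1; linarith
    · exact (Complex.continuous_im.comp (fp_om_cont hω)).continuousAt.eventually_const_lt he0
  obtain ⟨δ, hδ, hball⟩ := Metric.eventually_nhds_iff.mp hev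
  set I := Ioo (e - min ε δ) (e + min ε δ) with hI
  have hm : 0 < min ε δ := lt_min hε hδ
  have hIb : ∀ s ⊆ I, μt s ≤ C * volume s := by
    intro s hs
    refine fp_S2 μt s C fun x hx => ?_
    have hx' := hs hx
    have hd : dist x e < δ := by
      rw [Real.dist_eq, abs_lt]
      have := min_le_right ε δ
      exact ⟨by linarith [hx'.1], by linarith [hx'.2]⟩
    obtain ⟨k1, k2⟩ := hball hd
    have h1 := fp_M_tend ht hω hμt x (hQ0 x k2)
    have h2 := (Complex.continuous_im.tendsto _).comp h1
    refine (h2.eventually_le_const (lt_of_le_of_lt ?_ k1))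
    exact (le_abs_self _).trans (Complex.abs_im_le_norm _)
  have hzero : μt I = 0 := by
    obtain ⟨A, hA, hA1, hA2⟩ := Measure.mutuallySingular_singularPart μt volume
    have h1 : μt (I ∩ Aᶜ) = 0 := by
      have := hIb (I ∩ Aᶜ) inter_subset_left
      have h3 : volume (I ∩ Aᶜ) = 0 := measure_mono_null inter_subset_right hA2
      rw [h3, mul_zero] at this
      exact le_antisymm this bot_le
    have h2 : μt (I ∩ A) = 0 := by
      rw [fp_decomp μt, Measure.add_apply]
      have k1 : μt.singularPart volume (I ∩ A) = 0 := measure_mono_null inter_subset_right hA1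
      have k2 : acPart μt (I ∩ A) = 0 := by
        refine measure_mono_null ?_ h0
        intro x hx
        have := min_le_left ε δ
        exact ⟨by linarith [hx.1.1], by linarith [hx.1.2]⟩
      rw [k1, k2, add_zero]
    rw [← inter_union_compl I A]
    exact measure_union_null h2 h1
  have hv := fp_S4 μt hm hzero
  have h1 := (Complex.continuous_im.tendsto _).comp (fp_M_tend ht hω hμt e (hQ0 e he0))
  have h2 := tendsto_nhds_unique hv h1
  have h3 : (-((t : ℂ) - 1) / ((t : ℂ) * ω e - e)).im = (t - 1) * (t * (ω e).im) / Complex.normSq ((t : ℂ) * ω e - e) := by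
    have e1 : -((t : ℂ) - 1) / ((t : ℂ) * ω e - e) = ((-(t - 1) : ℝ) : ℂ) * ((t : ℂ) * ω e - e)⁻¹ := by
      push_cast; ring
    rw [e1, Complex.im_ofReal_mul, Complex.inv_im, hQim]
    ring
  rw [h3] at h2
  have : 0 < (t - 1) * (t * (ω e).im) / Complex.normSq ((t : ℂ) * ω e - e) :=
    div_pos (by positivity) (Complex.normSq_pos.mpr (hQ0 e he0))
  linarith

theorem fp_real {μ : Measure ℝ} {ω : ℂ → ℂ} {e : ℝ} (h : (ω e).im = 0) : ω e = ((ω e).re : ℂ) := by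
  apply Complex.ext <;> simp [h]

theorem fp_vanish {μ μt : Measure ℝ} {t : ℝ} (ht : 1 < t) {ω : ℂ → ℂ}
    (hω : IsSubordT μ t ω) (hμt : IsFreePow μ ω μt) {e r : ℝ} (hr : ω e = r) (hne : e ≠ t * r) :
    densityVanishesAt μt e := by
  have h0 : (t : ℂ) * ω e - e = ((t * r - e : ℝ) : ℂ) := by rw [hr]; push_cast; ring
  have h1 := (Complex.continuous_im.tendsto _).comp (fp_M_tend ht hω hμt e (by
    rw [h0]
    exact_mod_cast sub_ne_zero.mpr hne.symm))
  have h2 : (-((t : ℂ) - 1) / ((t : ℂ) * ω e - e)).im = 0 := by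
    rw [h0]
    have : -((t : ℂ) - 1) / ((t * r - e : ℝ) : ℂ) = ((-(t - 1) / (t * r - e) : ℝ) : ℂ) := by push_cast; rfl
    rw [this, Complex.ofReal_im]
  rw [h2] at h1
  exact h1

/-- no a.c. mass where the subordination function is real -/
theorem fp_B {μ μt : Measure ℝ} [IsProbabilityMeasure μ] {t : ℝ} (ht : 1 < t) {ω : ℂ → ℂ}
    (hω : IsSubordT μ t ω) (hμt : IsFreePow μ ω μt) (hfin : {w : ℝ | 0 < μ.real {w}}.Finite)
    {a b : ℝ} (h : ∀ e ∈ Ioo a b, (ω e).im = 0) :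
    μt (Ioo a b \ {e | 0 < μ.real {e / t}}) = 0 ∧ acPart μt (Ioo a b) = 0 := by
  have ht0 : 0 < t := by linarith
  have hpos : 0 < 1 - 1 / t := by rw [sub_pos, div_lt_one ht0]; exact ht
  have := hμt.1
  have h1 : μt (Ioo a b \ {e | 0 < μ.real {e / t}}) = 0 := by
    refine fp_S5 μt _ ?_ ?_
    · refine ((measure_mono sdiff_subset).trans_lt ?_).ne
      rw [Real.volume_Ioo]; exact ENNReal.ofReal_lt_top
    · rintro e ⟨he, hne⟩
      have hr := fp_real (μ := μ) (h e he)
      refine fp_vanish ht hω hμt hr ?_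
      intro heq
      apply hne
      have := fp_D_mass ht hω hr heq
      have e1 : e / t = (ω e).re := by rw [div_eq_iff ht0.ne']; linarith
      simp only [mem_ofPred_eq]
      rw [e1]
      linarith
  refine ⟨h1, ?_⟩
  have h2 : {e : ℝ | 0 < μ.real {e / t}}.Finite := by
    refine (hfin.image (fun w => t * w)).subset ?_
    intro e he
    exact ⟨e / t, he, by field_simp⟩
  have h3 : acPart μt {e : ℝ | 0 < μ.real {e / t}} = 0 := fp_acPart_ac μt (h2.measure_zero volume)
  refine measure_mono_null (?_ : _ ⊆ (Ioo a b \ {e | 0 < μ.real {e / t}}) ∪ {e | 0 < μ.real {e / t}})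
    (measure_union_null (le_antisymm ((fp_acPart_le μt _).trans h1.le) bot_le) h3)
  intro x hx
  by_cases hx2 : x ∈ {e | 0 < μ.real {e / t}}
  · exact Or.inr hx2
  · exact Or.inl ⟨hx, hx2⟩

theorem fp_div_mem {μ μt : Measure ℝ} [IsProbabilityMeasure μ] {t : ℝ} (ht : 1 < t) {ω : ℂ → ℂ}
    (hω : IsSubordT μ t ω) (hμt : IsFreePow μ ω μt) (hfin : {w : ℝ | 0 < μ.real {w}}.Finite)
    {e w : ℝ} (hw : ω e = w) (hew : e = t * w) (h0 : μt {e} = 0) : e ∈ msupp (acPart μt) := by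
  have ht0 : 0 < t := by linarith
  have := hμt.1
  by_contra hcon
  obtain ⟨ε, hε, h1⟩ := fp_notMem_msupp hcon
  have h2 : {e : ℝ | 0 < μ.real {e / t}}.Finite := by
    refine (hfin.image (fun w => t * w)).subset ?_
    intro e he
    exact ⟨e / t, he, by field_simp⟩
  have h3 : ∀ᶠ x in 𝓝 e, x ∉ {e : ℝ | 0 < μ.real {e / t}} \ {e} :=
    (h2.subset sdiff_subset).isClosed.isOpen_compl.mem_nhds (by simp)
  obtain ⟨δ, hδ, hball⟩ := Metric.eventually_nhds_iff.mp h3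
  have hm : 0 < min ε δ := lt_min hε hδ
  have hB := (fp_B ht hω hμt hfin (a := e - min ε δ) (b := e + min ε δ) (by
    intro x hx
    by_contra hne
    have := fp_A ht hω hμt hne
    have hx' : x ∈ Ioo (e - ε) (e + ε) := by
      have := min_le_left ε δ
      exact ⟨by linarith [hx.1], by linarith [hx.2]⟩
    exact fp_notMem_of_open hx' h1 this)).1
  have hz : μt (Ioo (e - min ε δ) (e + min ε δ)) = 0 := by
    refine measure_mono_null (?_ : Ioo (e - min ε δ) (e + min ε δ) ⊆ (Ioo (e - min ε δ) (e + min ε δ) \ {x | 0 < μ.real {x / t}}) ∪ {e}) (measure_union_null hB h0)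
    intro x hx
    by_cases hxe : x = e
    · exact Or.inr hxe
    · refine Or.inl ⟨hx, ?_⟩
      have hd : dist x e < δ := by
        rw [Real.dist_eq, abs_lt]
        have := min_le_right ε δ
        exact ⟨by linarith [hx.1], by linarith [hx.2]⟩
      intro hx3
      exact hball hd ⟨hx3, hxe⟩
  have k1 := fp_S4 μt hm hz
  have k2 := fp_D_div ht hω hμt hw hew
  exact not_tendsto_nhds_of_tendsto_atTop k2 _ k1


theorem fp_atoms {μ : Measure ℝ} {nac npp nppout : ℕ} {Em Ep : Fin nac → ℝ} {atom : Fin npp → ℝ}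
    {ρ : ℝ → ℝ} (hμ : Assumption1 μ nac npp nppout Em Ep atom ρ) {w : ℝ} (hw : 0 < μ.real {w}) :
    ∃ j, atom j = w := by
  have := hμ.prob
  by_contra hcon
  push Not at hcon
  have h1 : μ {w} = 0 := by
    have h2 : μ {w} = μ.singularPart volume {w} + acPart μ {w} := by
      conv_lhs => rw [fp_decomp μ]
      rfl
    have h3 : acPart μ {w} = 0 := fp_acPart_ac μ (by simp)
    rw [h2, h3, hμ.sing_atomic, add_zero, Measure.finsetSum_apply]
    refine Finset.sum_eq_zero fun j _ => ?_
    rw [Measure.smul_apply, Measure.dirac_apply' _ (measurableSet_singleton w)]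
    simp [hcon j]
  rw [measureReal_def, h1] at hw
  simp at hw

theorem fp_atom_posr {μ : Measure ℝ} {nac npp nppout : ℕ} {Em Ep : Fin nac → ℝ} {atom : Fin npp → ℝ}
    {ρ : ℝ → ℝ} (hμ : Assumption1 μ nac npp nppout Em Ep atom ρ) (j : Fin npp) :
    0 < μ.real {atom j} := by
  have := hμ.prob
  rw [measureReal_def]
  exact ENNReal.toReal_pos (hμ.atom_pos j).ne' (measure_ne_top _ _)

theorem fp_hfin {μ : Measure ℝ} {nac npp nppout : ℕ} {Em Ep : Fin nac → ℝ} {atom : Fin npp → ℝ}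
    {ρ : ℝ → ℝ} (hμ : Assumption1 μ nac npp nppout Em Ep atom ρ) :
    {w : ℝ | 0 < μ.real {w}}.Finite := by
  refine (Set.finite_range atom).subset ?_
  intro w hw
  obtain ⟨j, hj⟩ := fp_atoms hμ hw
  exact ⟨j, hj⟩

theorem fp_restr {μ : Measure ℝ} {nac npp nppout : ℕ} {Em Ep : Fin nac → ℝ} {atom : Fin npp → ℝ}
    {ρ : ℝ → ℝ} (hμ : Assumption1 μ nac npp nppout Em Ep atom ρ) (w : ℝ) :
    μ.restrict {w}ᶜ ≠ 0 := by
  intro h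
  rw [Measure.restrict_eq_zero] at h
  have h1 : acPart μ {w}ᶜ = 0 := le_antisymm ((fp_acPart_le μ _).trans h.le) bot_le
  have h3 : acPart μ {w} = 0 := fp_acPart_ac μ (by simp)
  let j0 : Fin nac := ⟨0, hμ.nac_pos⟩
  have h4 : Em j0 ∈ msupp (acPart μ) := by
    rw [hμ.supp_ac]
    exact mem_iUnion.mpr ⟨j0, ⟨le_rfl, (hμ.lt j0).le⟩⟩
  have h5 := h4 1 one_pos
  refine h5.ne' (measure_mono_null (subset_univ _) ?_)
  rw [← union_compl_self {w}]
  exact measure_union_null h3 h1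

theorem fp_m_bound (μ : Measure ℝ) [IsProbabilityMeasure μ] (r : ℝ) {δ η : ℝ} (hδ : 0 < δ) (hη : 0 < η) :
    ‖stT μ (r + η * Complex.I)‖ ^ 2 ≤ 2 * (δ⁻¹) ^ 2
      + 2 * (μ.real (Ioo (r - δ) (r + δ)) * Ifun μ (r + η * Complex.I)) := by
  set z : ℂ := r + η * Complex.I with hz
  have hzi : 0 < z.im := by rw [hz, fp_im]; exact hη
  have hzr : z.re = r := by rw [hz]; simp
  set A := Ioo (r - δ) (r + δ) with hA
  have hAm : MeasurableSet A := measurableSet_Ioo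
  have h1 : stT μ z = (∫ x in A, ((x : ℂ) - z)⁻¹ ∂μ) + ∫ x in Aᶜ, ((x : ℂ) - z)⁻¹ ∂μ := by
    unfold stT
    rw [integral_add_compl hAm (fp_int μ hzi.ne')]
  have h2 : ‖∫ x in A, ((x : ℂ) - z)⁻¹ ∂μ‖ ^ 2 ≤ μ.real A * Ifun μ z := by
    have k1 : ‖∫ x in A, ((x : ℂ) - z)⁻¹ ∂μ‖ ≤ ∫ x in A, 1 * ‖((x : ℂ) - z)⁻¹‖ ∂μ := by
      simp only [one_mul]
      exact norm_integral_le_integral_norm _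
    have hsq : ∀ x : ℝ, ‖((x : ℂ) - z)⁻¹‖ ^ 2 = (Complex.normSq ((x : ℂ) - z))⁻¹ := by
      intro x; rw [norm_inv, inv_pow, Complex.normSq_eq_norm_sq]
    have k2 := fp_cs (μ.restrict A) (fun _ => 1) (fun x => ‖((x : ℂ) - z)⁻¹‖)
      (by simp) (by
        simp only [hsq]; exact (fp_int_sq μ hzi.ne').integrableOn) (by
        simp only [one_mul]; exact (fp_int μ hzi.ne').norm.integrableOn)
    simp only [hsq] at k2
    have k3 : ∫ x in A, (Complex.normSq ((x : ℂ) - z))⁻¹ ∂μ ≤ Ifun μ z :=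
      setIntegral_le_integral (fp_int_sq μ hzi.ne')
        (Eventually.of_forall fun y => inv_nonneg.mpr (Complex.normSq_nonneg _))
    have k4 : ∫ x in A, (1 : ℝ) ^ 2 ∂μ = μ.real A := by simp
    rw [k4] at k2
    calc _ ≤ (∫ x in A, 1 * ‖((x : ℂ) - z)⁻¹‖ ∂μ) ^ 2 := by gcongr
      _ ≤ _ := k2
      _ ≤ _ := by gcongr
  have h3 : ‖∫ x in Aᶜ, ((x : ℂ) - z)⁻¹ ∂μ‖ ≤ δ⁻¹ := by
    have k1 : ‖∫ x in Aᶜ, ((x : ℂ) - z)⁻¹ ∂μ‖ ≤ δ⁻¹ * μ.real Aᶜ := by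
      refine norm_setIntegral_le_of_norm_le_const (measure_lt_top _ _) ?_
      intro x hx
      rw [norm_inv]
      refine inv_anti₀ hδ ?_
      have k2 : δ ≤ |x - r| := by
        by_contra hcon
        push Not at hcon
        rw [abs_lt] at hcon
        exact hx ⟨by linarith, by linarith⟩
      have k3 := Complex.abs_re_le_norm ((x : ℂ) - z)
      rw [Complex.sub_re, hzr, Complex.ofReal_re] at k3
      linarith
    have k2 : μ.real Aᶜ ≤ 1 := measureReal_le_one
    have : 0 < δ⁻¹ := by positivity
    nlinarith
  rw [h1]
  have h4 := norm_add_le (∫ x in A, ((x : ℂ) - z)⁻¹ ∂μ) (∫ x in Aᶜ, ((x : ℂ) - z)⁻¹ ∂μ)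
  set a := ‖∫ x in A, ((x : ℂ) - z)⁻¹ ∂μ‖
  set b := ‖∫ x in Aᶜ, ((x : ℂ) - z)⁻¹ ∂μ‖ with hb
  have hb0 : 0 ≤ b := norm_nonneg _
  have h5 : b ^ 2 ≤ δ⁻¹ ^ 2 := by gcongr
  calc _ ≤ (a + b) ^ 2 := by gcongr
    _ ≤ _ := by nlinarith [sq_nonneg (a - b)]

theorem fp_small (μ : Measure ℝ) [IsProbabilityMeasure μ] (r : ℝ) (h0 : μ.real {r} = 0) {ε : ℝ} (hε : 0 < ε) :
    ∃ δ > 0, μ.real (Ioo (r - δ) (r + δ)) < ε := by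
  have h1 : Tendsto (fun n : ℕ => μ (Ioo (r - 1 / ((n : ℝ) + 1)) (r + 1 / ((n : ℝ) + 1)))) atTop
      (𝓝 (μ (⋂ n : ℕ, Ioo (r - 1 / ((n : ℝ) + 1)) (r + 1 / ((n : ℝ) + 1))))) := by
    refine tendsto_measure_iInter_atTop (fun n => measurableSet_Ioo.nullMeasurableSet) ?_ ⟨0, measure_ne_top _ _⟩
    intro m n hmn
    have : 1 / ((n : ℝ) + 1) ≤ 1 / ((m : ℝ) + 1) := Nat.one_div_le_one_div hmn
    exact Ioo_subset_Ioo (by linarith) (by linarith)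
  have h2 : (⋂ n : ℕ, Ioo (r - 1 / ((n : ℝ) + 1)) (r + 1 / ((n : ℝ) + 1))) = {r} := by
    ext x
    simp only [mem_iInter, mem_singleton_iff]
    constructor
    · intro hx
      by_contra hne
      have hpos : 0 < |x - r| := abs_pos.mpr (sub_ne_zero.mpr hne)
      obtain ⟨n, hn⟩ := exists_nat_one_div_lt hpos
      have := hx n
      have h3 : |x - r| < 1 / ((n : ℝ) + 1) := by
        rw [abs_lt]; exact ⟨by linarith [this.1], by linarith [this.2]⟩
      linarith
    · rintro rfl n
      have : (0 : ℝ) < 1 / ((n : ℝ) + 1) := by positivity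
      exact ⟨by linarith, by linarith⟩
  rw [h2] at h1
  have h3 : μ {r} = 0 := by
    rw [measureReal_def, ENNReal.toReal_eq_zero_iff] at h0
    exact h0.resolve_right (measure_ne_top _ _)
  rw [h3] at h1
  have h4 := h1.eventually_lt_const (u := ENNReal.ofReal ε) (ENNReal.ofReal_pos.mpr hε)
  obtain ⟨n, hn⟩ := h4.exists
  refine ⟨1 / ((n : ℝ) + 1), by positivity, ?_⟩
  rw [measureReal_def]
  exact (ENNReal.toReal_lt_of_lt_ofReal hn)

theorem fp_blow (μ : Measure ℝ) [IsProbabilityMeasure μ] (r : ℝ) {c : ℝ} (hc : 0 < c) (h0 : μ.real {r} = 0)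
    (hJ : ∀ η : ℝ, 0 < η → fpJ μ (r + η * Complex.I) ≤ c) :
    ∫⁻ x, ENNReal.ofReal (((x - r) ^ 2)⁻¹) ∂μ < ⊤ := by
  obtain ⟨δ, hδ, hsm⟩ := fp_small μ r h0 (ε := 1 / (4 * c)) (by positivity)
  have hI : ∀ η : ℝ, 0 < η → Ifun μ (r + η * Complex.I) ≤ 4 * c * (δ⁻¹) ^ 2 := by
    intro η hη
    have hzi : 0 < ((r : ℂ) + (η : ℂ) * Complex.I).im := by rw [fp_im]; exact hη
    have h1 := hJ η hη
    rw [fp_J_eq μ hzi, div_le_iff₀ (by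
      have := norm_pos_iff.mpr (fp_stT_ne μ hzi); positivity)] at h1
    have h2 := fp_m_bound μ r hδ hη
    have h3 := fp_Ifun_nonneg μ (r + η * Complex.I)
    rw [lt_div_iff₀ (by positivity)] at hsm
    have h4 : c * (μ.real (Ioo (r - δ) (r + δ)) * Ifun μ (r + η * Complex.I)) ≤ 1 / 4 * Ifun μ (r + η * Complex.I) := by
      rw [← mul_assoc]
      gcongr
      linarith
    have h5 := mul_le_mul_of_nonneg_left h2 hc.le
    nlinarith
  have hF : ∫⁻ x, ENNReal.ofReal (((x - r) ^ 2)⁻¹) ∂μ ≤ ENNReal.ofReal (4 * c * (δ⁻¹) ^ 2) := by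
    by_cases hae : ∀ᵐ x ∂μ, x ≠ r
    · have hlim : ∀ x : ℝ, x ≠ r → Tendsto (fun n : ℕ => ENNReal.ofReal
          ((Complex.normSq ((x : ℂ) - (r + ((1 / ((n : ℝ) + 1) : ℝ) : ℂ) * Complex.I)))⁻¹)) atTop
          (𝓝 (ENNReal.ofReal (((x - r) ^ 2)⁻¹))) := by
        intro x hx
        refine (ENNReal.continuous_ofReal.tendsto _).comp ?_
        refine Tendsto.inv₀ ?_ (by have := sub_ne_zero.mpr hx; positivity)
        have k1 : ∀ n : ℕ, Complex.normSq ((x : ℂ) - (r + ((1 / ((n : ℝ) + 1) : ℝ) : ℂ) * Complex.I))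
            = (x - r) ^ 2 + (1 / ((n : ℝ) + 1)) ^ 2 := by
          intro n
          rw [Complex.normSq_apply, Complex.sub_re, Complex.sub_im, fp_im, Complex.add_re,
            Complex.re_ofReal_mul, Complex.I_re, Complex.ofReal_re, Complex.ofReal_re, Complex.ofReal_im]
          ring
        simp only [k1]
        have := (tendsto_one_div_add_atTop_nhds_zero_nat (𝕜 := ℝ)).pow 2 |>.const_add ((x - r) ^ 2)
        simpa using this
      calc ∫⁻ x, ENNReal.ofReal (((x - r) ^ 2)⁻¹) ∂μ
          = ∫⁻ x, liminf (fun n : ℕ => ENNReal.ofReal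
          ((Complex.normSq ((x : ℂ) - (r + ((1 / ((n : ℝ) + 1) : ℝ) : ℂ) * Complex.I)))⁻¹)) atTop ∂μ := by
            refine lintegral_congr_ae ?_
            filter_upwards [hae] with x hx
            exact (hlim x hx).liminf_eq.symm
        _ ≤ liminf (fun n : ℕ => ∫⁻ x, ENNReal.ofReal
          ((Complex.normSq ((x : ℂ) - (r + ((1 / ((n : ℝ) + 1) : ℝ) : ℂ) * Complex.I)))⁻¹) ∂μ) atTop := by
            refine lintegral_liminf_le fun n => ?_
            have : Measurable Complex.normSq := Complex.continuous_normSq.measurable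
            fun_prop
        _ ≤ _ := by
            refine liminf_le_of_le (by isBoundedDefault) ?_
            intro b hb
            obtain ⟨n, hn⟩ := hb.exists
            refine hn.trans ?_
            have hpos : (0 : ℝ) < 1 / ((n : ℝ) + 1) := by positivity
            have hzi : 0 < ((r : ℂ) + ((1 / ((n : ℝ) + 1) : ℝ) : ℂ) * Complex.I).im := by rw [fp_im]; exact hpos
            rw [← ofReal_integral_eq_lintegral_ofReal (fp_int_sq μ hzi.ne')
              (Eventually.of_forall fun y => inv_nonneg.mpr (Complex.normSq_nonneg _))]
            exact ENNReal.ofReal_le_ofReal (hI _ hpos)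
    · exfalso
      apply hae
      rw [measureReal_def, ENNReal.toReal_eq_zero_iff] at h0
      have h3 := h0.resolve_right (measure_ne_top _ _)
      have := measure_eq_zero_iff_ae_notMem.mp h3
      simpa using this
  exact hF.trans_lt ENNReal.ofReal_lt_top

theorem fp_nonint {r a b : ℝ} (hab : a < b) (hr : r ∈ Icc a b) :
    ∫⁻ x in Ioo a b, ENNReal.ofReal (|x - r|⁻¹) = ⊤ := by
  by_contra hcon
  have h1 : ¬ IntervalIntegrable (fun x => (x - r)⁻¹) volume a b := by
    rw [intervalIntegrable_sub_inv_iff]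
    push Not
    refine ⟨hab.ne, ?_⟩
    rw [uIcc_of_le hab.le]; exact hr
  apply h1
  rw [intervalIntegrable_iff_integrableOn_Ioo_of_le hab.le]
  refine ⟨by fun_prop, ?_⟩
  rw [hasFiniteIntegral_iff_norm]
  simp only [norm_inv, Real.norm_eq_abs]
  exact lt_top_iff_ne_top.mpr hcon

theorem fp_pow_ge {y L τ : ℝ} (hy : 0 < y) (hyL : y ≤ L) (hτ : τ < 1) : L ^ (τ - 1) * y ≤ y ^ τ := by
  have h1 : y ^ τ = y ^ (τ - 1) * y := by
    rw [← Real.rpow_add_one hy.ne']; ring_nf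
  rw [h1]
  have h2 : L ^ (τ - 1) ≤ y ^ (τ - 1) := Real.rpow_le_rpow_of_nonpos hy hyL (by linarith)
  gcongr

theorem fp_rho {μ : Measure ℝ} {nac npp nppout : ℕ} {Em Ep : Fin nac → ℝ} {atom : Fin npp → ℝ}
    {ρ : ℝ → ℝ} (hμ : Assumption1 μ nac npp nppout Em Ep atom ρ) (j : Fin nac) :
    ∃ k > 0, ∀ᵐ x ∂(volume : Measure ℝ), x ∈ Ioo (Em j) (Ep j) → k * ((x - Em j) * (Ep j - x)) ≤ ρ x := by
  obtain ⟨tm, tp, C, h1, h2, h3, h4, h5, h6⟩ := hμ.power_law j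
  have hL : 0 < Ep j - Em j := by linarith [hμ.lt j]
  refine ⟨C⁻¹ * ((Ep j - Em j) ^ (tm - 1) * (Ep j - Em j) ^ (tp - 1)), by
    have := Real.rpow_pos_of_pos hL (tm - 1)
    have := Real.rpow_pos_of_pos hL (tp - 1)
    positivity, ?_⟩
  filter_upwards [h6] with x hx hxI
  have k1 := (hx ⟨hxI.1.le, hxI.2.le⟩).1
  have hx1 : 0 < x - Em j := by linarith [hxI.1]
  have hx2 : 0 < Ep j - x := by linarith [hxI.2]
  have p1 := Real.rpow_pos_of_pos hx1 tm
  have p2 := Real.rpow_pos_of_pos hx2 tp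
  rw [lt_div_iff₀ (by positivity)] at k1
  have q1 := fp_pow_ge hx1 (L := Ep j - Em j) (by linarith) h2
  have q2 := fp_pow_ge hx2 (L := Ep j - Em j) (by linarith) h4
  have hLm := Real.rpow_pos_of_pos hL (tm - 1)
  have hLp := Real.rpow_pos_of_pos hL (tp - 1)
  calc _ = C⁻¹ * (((Ep j - Em j) ^ (tm - 1) * (x - Em j)) * ((Ep j - Em j) ^ (tp - 1) * (Ep j - x))) := by ring
    _ ≤ C⁻¹ * ((x - Em j) ^ tm * (Ep j - x) ^ tp) := by gcongr
    _ ≤ _ := k1.le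

theorem fp_infty {μ : Measure ℝ} {nac npp nppout : ℕ} {Em Ep : Fin nac → ℝ} {atom : Fin npp → ℝ}
    {ρ : ℝ → ℝ} (hμ : Assumption1 μ nac npp nppout Em Ep atom ρ) (j : Fin nac) {r : ℝ}
    (hr : r ∈ Icc (Em j) (Ep j)) :
    ∫⁻ x, ENNReal.ofReal (((x - r) ^ 2)⁻¹) ∂μ = ⊤ := by
  obtain ⟨k, hk, hρ⟩ := fp_rho hμ j
  have hL : 0 < Ep j - Em j := by linarith [hμ.lt j]
  -- choice of the one-sided interval
  obtain ⟨a, b, hab, hrab, hsub, hlow⟩ : ∃ a b : ℝ, a < b ∧ r ∈ Icc a b ∧ Ioo a b ⊆ Ioo (Em j) (Ep j) ∧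
      ∀ x ∈ Ioo a b, (Ep j - Em j) / 4 * |x - r| ≤ (x - Em j) * (Ep j - x) := by
    by_cases hmid : r ≤ (Em j + Ep j) / 2
    · refine ⟨r, (Em j + 3 * Ep j) / 4, by linarith, ⟨le_rfl, by linarith⟩,
        Ioo_subset_Ioo hr.1 (by linarith), ?_⟩
      intro x hx
      rw [abs_of_pos (by linarith [hx.1])]
      have := hr.1
      have h1 : (Ep j - Em j) / 4 ≤ Ep j - x := by linarith [hx.2]
      have h2 : x - r ≤ x - Em j := by linarith
      have h3 : 0 < x - r := by linarith [hx.1]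
      nlinarith
    · push Not at hmid
      refine ⟨(3 * Em j + Ep j) / 4, r, by linarith, ⟨by linarith, le_rfl⟩,
        Ioo_subset_Ioo (by linarith) hr.2, ?_⟩
      intro x hx
      rw [abs_of_neg (by linarith [hx.2])]
      have := hr.2
      have h1 : (Ep j - Em j) / 4 ≤ x - Em j := by linarith [hx.1]
      have h2 : r - x ≤ Ep j - x := by linarith
      have h3 : 0 < r - x := by linarith [hx.2]
      nlinarith
  have hac : ∫⁻ x, ENNReal.ofReal (((x - r) ^ 2)⁻¹) ∂(acPart μ) = ⊤ := by
    set f : ℝ → ENNReal := (Ioo a b).indicator fun x => ENNReal.ofReal (k * ((Ep j - Em j) / 4) * |x - r|) with hf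
    have hfm : Measurable f := Measurable.indicator (by fun_prop) measurableSet_Ioo
    have hle : volume.withDensity f ≤ acPart μ := by
      rw [hμ.ac_density]
      refine withDensity_mono ?_
      filter_upwards [hρ] with x hx
      by_cases hxI : x ∈ Ioo a b
      · rw [hf, indicator_of_mem hxI]
        apply ENNReal.ofReal_le_ofReal
        have h2 := hx (hsub hxI)
        have h3 := hlow x hxI
        nlinarith
      · rw [hf, indicator_of_notMem hxI]
        exact bot_le
    rw [eq_top_iff]
    refine le_trans ?_ (lintegral_mono' hle le_rfl)
    rw [lintegral_withDensity_eq_lintegral_mul volume hfm (by fun_prop)]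
    have h1 : ENNReal.ofReal (k * ((Ep j - Em j) / 4)) * ∫⁻ x in Ioo a b, ENNReal.ofReal (|x - r|⁻¹) = ⊤ := by
      rw [fp_nonint hab hrab, ENNReal.mul_top]
      exact (ENNReal.ofReal_pos.mpr (by positivity)).ne'
    rw [← h1, ← lintegral_const_mul _ (by fun_prop)]
    refine le_trans ?_ (setLIntegral_le_lintegral (Ioo a b) _)
    refine setLIntegral_mono' measurableSet_Ioo ?_
    intro x hxI
    rw [Pi.mul_apply, hf, indicator_of_mem hxI, ← ENNReal.ofReal_mul (by positivity),
      ← ENNReal.ofReal_mul (by positivity)]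
    apply ENNReal.ofReal_le_ofReal
    by_cases hxr : x = r
    · subst hxr; simp
    have h4 : 0 < |x - r| := abs_pos.mpr (sub_ne_zero.mpr hxr)
    rw [← sq_abs (x - r)]
    apply le_of_eq
    field_simp
  rw [eq_top_iff, ← hac]
  exact lintegral_mono' (fp_acPart_le μ) le_rfl

/-- a real value of the subordination function in a block sits at an atom -/
theorem fp_block {μ : Measure ℝ} {nac npp nppout : ℕ} {Em Ep : Fin nac → ℝ} {atom : Fin npp → ℝ}
    {ρ : ℝ → ℝ} (hμ : Assumption1 μ nac npp nppout Em Ep atom ρ) {t : ℝ} (ht : 1 < t) {ω : ℂ → ℂ}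
    (hω : IsSubordT μ t ω) {e r : ℝ} (hr : ω e = r) (j : Fin nac) (hrj : r ∈ Icc (Em j) (Ep j)) :
    0 < μ.real {r} ∧ r ∈ Ioo (Em j) (Ep j) := by
  have := hμ.prob
  have hc : 0 < t / (t - 1) := div_pos (by linarith) (by linarith)
  have hpos : 0 < μ.real {r} := by
    by_contra hcon
    have h0 : μ.real {r} = 0 := le_antisymm (not_lt.mp hcon) measureReal_nonneg
    have := fp_blow μ r hc h0 (fun η hη => (fp_C ht hω hr hη).2)
    rw [fp_infty hμ j hrj] at this
    exact lt_irrefl _ this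
  refine ⟨hpos, ?_⟩
  obtain ⟨i, hi⟩ := fp_atoms hμ hpos
  obtain ⟨h1, h2⟩ := hμ.no_atom_endpoint i j
  rw [hi] at h1 h2
  exact ⟨lt_of_le_of_ne hrj.1 h1.symm, lt_of_le_of_ne hrj.2 h2⟩

theorem fp_atom_e {μ : Measure ℝ} [IsProbabilityMeasure μ] {t : ℝ} (ht : 1 < t) {ω : ℂ → ℂ}
    (hω : IsSubordT μ t ω) {e r : ℝ} (hr : ω e = r) (hp : 0 < μ.real {r}) : e = t * r := by
  have ht1 : 0 < t - 1 := by linarith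
  have h1 : Tendsto (fun η : ℝ => nrT μ (r + η * Complex.I)) (𝓝[>] 0) (𝓝 0) := by
    have h2 := (fp_atom_vert μ r).inv₀ (by simpa using hp.ne')
    have h3 : Tendsto (fun η : ℝ => -((η : ℂ) * Complex.I)) (𝓝[>] 0) (𝓝 0) := by
      have : Tendsto (fun η : ℝ => -((η : ℂ) * Complex.I)) (𝓝 0) (𝓝 (-(((0 : ℝ) : ℂ) * Complex.I))) := by
        apply Continuous.tendsto; fun_prop
      simpa using this.mono_left nhdsWithin_le_nhds
    have h4 := h3.mul h2
    rw [zero_mul] at h4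
    refine h4.congr' ?_
    filter_upwards [fp_ev_pos] with η hη
    unfold nrT
    have : (η : ℂ) ≠ 0 := by exact_mod_cast hη.ne'
    have hI := Complex.I_ne_zero
    rw [mul_inv]
    field_simp
  have h2 : Tendsto (fun η : ℝ => nrT μ (r + η * Complex.I)) (𝓝[>] 0) (𝓝 (((t * r - e) / (t - 1) : ℝ) : ℂ)) := by
    rw [tendsto_iff_norm_sub_tendsto_zero]
    have h0 : Tendsto (fun η : ℝ => t / (t - 1) * η) (𝓝[>] 0) (𝓝 0) := by
      have : Tendsto (fun η : ℝ => t / (t - 1) * η) (𝓝 0) (𝓝 (t / (t - 1) * 0)) :=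
        tendsto_id.const_mul _
      rw [mul_zero] at this
      exact this.mono_left nhdsWithin_le_nhds
    refine squeeze_zero' (Eventually.of_forall fun _ => norm_nonneg _) ?_ h0
    filter_upwards [fp_ev_pos] with η hη
    exact (fp_C ht hω hr hη).1
  have h3 := tendsto_nhds_unique h1 h2
  have h4 : (t * r - e) / (t - 1) = 0 := by exact_mod_cast h3.symm
  rw [div_eq_zero_iff] at h4
  rcases h4 with h4 | h4 <;> linarith

theorem fp_C_tend {μ : Measure ℝ} [IsProbabilityMeasure μ] {t : ℝ} (ht : 1 < t) {ω : ℂ → ℂ}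
    (hω : IsSubordT μ t ω) {e r : ℝ} (hr : ω e = r) :
    Tendsto (fun η : ℝ => nrT μ (r + η * Complex.I)) (𝓝[>] 0) (𝓝 (((t * r - e) / (t - 1) : ℝ) : ℂ)) := by
  rw [tendsto_iff_norm_sub_tendsto_zero]
  have h0 : Tendsto (fun η : ℝ => t / (t - 1) * η) (𝓝[>] 0) (𝓝 0) := by
    have : Tendsto (fun η : ℝ => t / (t - 1) * η) (𝓝 0) (𝓝 (t / (t - 1) * 0)) :=
      tendsto_id.const_mul _
    rw [mul_zero] at this
    exact this.mono_left nhdsWithin_le_nhds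
  refine squeeze_zero' (Eventually.of_forall fun _ => norm_nonneg _) ?_ h0
  filter_upwards [fp_ev_pos] with η hη
  exact (fp_C ht hω hr hη).1

theorem fp_msupp_closed (ν : Measure ℝ) : IsClosed (msupp ν) := by
  rw [← isOpen_compl_iff, Metric.isOpen_iff]
  intro x hx
  obtain ⟨ε, hε, h⟩ := fp_notMem_msupp hx
  refine ⟨ε, hε, ?_⟩
  intro y hy
  rw [Real.ball_eq_Ioo] at hy
  exact fp_notMem_of_open hy h

/-- values in a block force membership in the a.c. support -/
theorem fp_block_mem {μ μt : Measure ℝ} {nac npp nppout : ℕ} {Em Ep : Fin nac → ℝ} {atom : Fin npp → ℝ}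
    {ρ : ℝ → ℝ} (hμ : Assumption1 μ nac npp nppout Em Ep atom ρ) {t : ℝ} (ht : 1 < t) {ω : ℂ → ℂ}
    (hω : IsSubordT μ t ω) (hμt : IsFreePow μ ω μt) {e : ℝ} (j : Fin nac)
    (hrj : (ω e).re ∈ Icc (Em j) (Ep j)) (him : (ω e).im = 0) : e ∈ msupp (acPart μt) := by
  have := hμ.prob
  have hr := fp_real (μ := μ) him
  obtain ⟨hp, hI⟩ := fp_block hμ ht hω hr j hrj
  have hfin := fp_hfin hμ
  have h2 : {e : ℝ | 0 < μ.real {e / t}}.Finite := by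
    refine (hfin.image (fun w => t * w)).subset ?_
    intro e he
    have : 0 < t := by linarith
    exact ⟨e / t, he, by field_simp⟩
  have h3 : ∀ᶠ x in 𝓝[≠] e, x ∈ msupp (acPart μt) := by
    have k1 : ∀ᶠ x in 𝓝 e, (ω (x : ℝ)).re ∈ Ioo (Em j) (Ep j) :=
      (Complex.continuous_re.comp (fp_om_cont hω)).continuousAt.preimage_mem_nhds
        (isOpen_Ioo.mem_nhds hI)
    have k2 : ∀ᶠ x in 𝓝 e, x ∉ {e : ℝ | 0 < μ.real {e / t}} \ {e} :=
      (h2.subset sdiff_subset).isClosed.isOpen_compl.mem_nhds (by simp)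
    filter_upwards [nhdsWithin_le_nhds k1, nhdsWithin_le_nhds k2, self_mem_nhdsWithin] with x hx1 hx2 hx3
    by_contra hcon
    have hxim : (ω x).im = 0 := by
      by_contra h
      exact hcon (fp_A ht hω hμt h)
    have hxr := fp_real (μ := μ) hxim
    have hxp := (fp_block hμ ht hω hxr j (Ioo_subset_Icc_self hx1)).1
    have hxe := fp_atom_e ht hω hxr hxp
    apply hx2
    refine ⟨?_, hx3⟩
    have e1 : x / t = (ω x).re := by
      rw [div_eq_iff (by linarith)]; linarith
    simp only [mem_ofPred_eq]
    rw [e1]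
    exact hxp
  have h4 : (𝓝[≠] e).NeBot := inferInstance
  exact (fp_msupp_closed _).mem_of_frequently_of_tendsto h3.frequently
    (tendsto_id.mono_left nhdsWithin_le_nhds)


theorem fp_lower {z : ℂ} {r δ x : ℝ} (hz : ‖z - r‖ < δ / 2) (hx : x ∉ Ioo (r - δ) (r + δ)) :
    δ / 2 ≤ ‖(x : ℂ) - z‖ := by
  have h1 : δ ≤ |x - r| := by
    by_contra hcon
    push Not at hcon
    rw [abs_lt] at hcon
    exact hx ⟨by linarith, by linarith⟩
  have h2 : |x - r| = ‖((x : ℂ) - z) + (z - r)‖ := by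
    rw [← Real.norm_eq_abs, ← Complex.norm_real]; push_cast; congr 1; ring
  have h3 := norm_add_le ((x : ℂ) - z) (z - r)
  linarith

theorem fp_int_gap (ν : Measure ℝ) [IsFiniteMeasure ν] {r δ : ℝ} (hδ : 0 < δ)
    (h : ν (Ioo (r - δ) (r + δ)) = 0) {z : ℂ} (hz : ‖z - r‖ < δ / 2) :
    Integrable (fun x : ℝ => ((x : ℂ) - z)⁻¹) ν := by
  have hae : ∀ᵐ y ∂ν, y ∉ Ioo (r - δ) (r + δ) := measure_eq_zero_iff_ae_notMem.mp h
  refine Integrable.of_bound (fp_meas z).aestronglyMeasurable ((δ / 2)⁻¹) ?_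
  filter_upwards [hae] with x hx
  rw [norm_inv]
  exact inv_anti₀ (by positivity) (fp_lower hz hx)

theorem fp_an_stT (ν : Measure ℝ) [IsFiniteMeasure ν] {r δ : ℝ} (hδ : 0 < δ)
    (h : ν (Ioo (r - δ) (r + δ)) = 0) : AnalyticAt ℂ (stT ν) (r : ℂ) := by
  have hae : ∀ᵐ y ∂ν, y ∉ Ioo (r - δ) (r + δ) := measure_eq_zero_iff_ae_notMem.mp h
  have hopen : IsOpen (Metric.ball (r : ℂ) (δ / 2)) := Metric.isOpen_ball
  have hd : DifferentiableOn ℂ (stT ν) (Metric.ball (r : ℂ) (δ / 2)) := by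
    intro z hz
    have hmem := hopen.mem_nhds hz
    have := hasDerivAt_integral_of_dominated_loc_of_deriv_le (μ := ν) (𝕜 := ℂ)
      (F := fun (z : ℂ) (x : ℝ) => ((x : ℂ) - z)⁻¹) (F' := fun z x => (((x : ℂ) - z) ^ 2)⁻¹)
      (x₀ := z) (bound := fun _ => ((δ / 2) ^ 2)⁻¹) hmem
      (Eventually.of_forall fun z => (fp_meas z).aestronglyMeasurable)
      (fp_int_gap ν hδ h (by simpa [dist_eq_norm] using hz))
      (by have : Measurable (fun x : ℝ => (((x : ℂ) - z) ^ 2)⁻¹) := by fun_prop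
          exact this.aestronglyMeasurable)
      (by
        filter_upwards [hae] with x hx w hw
        have := fp_lower (z := w) (by simpa [dist_eq_norm] using hw) hx
        rw [norm_inv, norm_pow]
        gcongr)
      (integrable_const _)
      (by
        filter_upwards [hae] with x hx w hw
        have := fp_lower (z := w) (by simpa [dist_eq_norm] using hw) hx
        have hne : (x : ℂ) - w ≠ 0 := by
          rw [← norm_pos_iff]; linarith
        have h1 := ((hasDerivAt_id w).const_sub (x : ℂ)).fun_inv hne
        simp only [neg_neg, id_eq, one_div] at h1
        exact h1)
    exact this.2.differentiableAt.differentiableWithinAt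
  exact hd.analyticAt (hopen.mem_nhds (Metric.mem_ball_self (by positivity)))

theorem fp_stT_real (ν : Measure ℝ) (x : ℝ) : stT ν (x : ℂ) = (stTR ν x : ℂ) := by
  unfold stT stTR
  rw [← integral_complex_ofReal]
  push_cast
  rfl

open Classical in
/-- extension of the negative reciprocal transform across isolated atoms -/
noncomputable def fpF (μ : Measure ℝ) (z : ℂ) : ℂ :=
  if z.im = 0 ∧ 0 < μ.real {z.re} then 0 else nrT μ z

theorem fp_F_up (μ : Measure ℝ) {z : ℂ} (hz : 0 < z.im) : fpF μ z = nrT μ z := by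
  unfold fpF
  rw [if_neg]
  intro h
  exact hz.ne' h.1

theorem fp_F_im (μ : Measure ℝ) (x : ℝ) : (fpF μ x).im = 0 := by
  unfold fpF
  split_ifs
  · simp
  · unfold nrT
    rw [fp_stT_real, ← Complex.ofReal_inv, ← Complex.ofReal_neg, Complex.ofReal_im]

theorem fp_F_real (μ : Measure ℝ) (x : ℝ) : fpF μ x = ((fpF μ x).re : ℂ) := by
  apply Complex.ext <;> simp [fp_F_im]

theorem fp_iso {μ : Measure ℝ} {nac npp nppout : ℕ} {Em Ep : Fin nac → ℝ} {atom : Fin npp → ℝ}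
    {ρ : ℝ → ℝ} (hμ : Assumption1 μ nac npp nppout Em Ep atom ρ) {r : ℝ}
    (hr : r ∉ msupp (acPart μ)) : ∃ δ > 0, μ.restrict {r}ᶜ (Ioo (r - δ) (r + δ)) = 0 := by
  have := hμ.prob
  obtain ⟨ε, hε, h1⟩ := fp_notMem_msupp hr
  have hfin : (range atom \ {r}).Finite := (finite_range atom).subset sdiff_subset
  have h2 : ∀ᶠ x in 𝓝 r, x ∉ range atom \ {r} := hfin.isClosed.isOpen_compl.mem_nhds (by simp)
  obtain ⟨δ, hδ, hball⟩ := Metric.eventually_nhds_iff.mp h2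
  refine ⟨min ε δ, lt_min hε hδ, ?_⟩
  rw [Measure.restrict_apply measurableSet_Ioo]
  have hle1 := min_le_left ε δ
  have hle2 := min_le_right ε δ
  have hms : MeasurableSet (Ioo (r - min ε δ) (r + min ε δ) ∩ {r}ᶜ) :=
    measurableSet_Ioo.inter (measurableSet_singleton r).compl
  have h3 : μ (Ioo (r - min ε δ) (r + min ε δ) ∩ {r}ᶜ)
      = μ.singularPart volume (Ioo (r - min ε δ) (r + min ε δ) ∩ {r}ᶜ)
        + acPart μ (Ioo (r - min ε δ) (r + min ε δ) ∩ {r}ᶜ) := by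
    conv_lhs => rw [fp_decomp μ]
    rfl
  rw [h3]
  have h4 : acPart μ (Ioo (r - min ε δ) (r + min ε δ) ∩ {r}ᶜ) = 0 :=
    measure_mono_null (inter_subset_left.trans (Ioo_subset_Ioo (by linarith) (by linarith))) h1
  rw [h4, add_zero, hμ.sing_atomic, Measure.finsetSum_apply]
  refine Finset.sum_eq_zero fun j _ => ?_
  rw [Measure.smul_apply, Measure.dirac_apply' _ hms, indicator_of_notMem, smul_zero]
  rintro ⟨k1, k2⟩
  have hd : dist (atom j) r < δ := by
    rw [Real.dist_eq, abs_lt]; exact ⟨by linarith [k1.1], by linarith [k1.2]⟩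
  exact hball hd ⟨mem_range_self j, k2⟩

theorem fp_no_atom_gap {μ : Measure ℝ} [IsProbabilityMeasure μ] {r δ x : ℝ}
    (h : μ.restrict {r}ᶜ (Ioo (r - δ) (r + δ)) = 0) (hx : x ∈ Ioo (r - δ) (r + δ)) (hxr : x ≠ r) :
    μ.real {x} = 0 := by
  rw [Measure.restrict_apply measurableSet_Ioo] at h
  rw [measureReal_def, measure_mono_null (singleton_subset_iff.mpr (show x ∈ Ioo (r - δ) (r + δ) ∩ {r}ᶜ from ⟨hx, hxr⟩)) h]
  simp

theorem fp_gap_of_nonatom {μ : Measure ℝ} [IsProbabilityMeasure μ] {r δ : ℝ}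
    (h : μ.restrict {r}ᶜ (Ioo (r - δ) (r + δ)) = 0) (h0 : μ.real {r} = 0) :
    μ (Ioo (r - δ) (r + δ)) = 0 := by
  rw [Measure.restrict_apply measurableSet_Ioo] at h
  have h1 : μ {r} = 0 := by
    rw [measureReal_def, ENNReal.toReal_eq_zero_iff] at h0
    exact h0.resolve_right (measure_ne_top _ _)
  refine measure_mono_null ?_ (measure_union_null h h1)
  intro x hx
  by_cases hxr : x = r
  · exact Or.inr hxr
  · exact Or.inl ⟨hx, hxr⟩

theorem fp_Fan {μ : Measure ℝ} {nac npp nppout : ℕ} {Em Ep : Fin nac → ℝ} {atom : Fin npp → ℝ}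
    {ρ : ℝ → ℝ} (hμ : Assumption1 μ nac npp nppout Em Ep atom ρ) {r : ℝ}
    (hr : r ∉ msupp (acPart μ)) (hr2 : ¬ (r ∉ msupp μ ∧ stTR μ r = 0)) :
    AnalyticAt ℂ (fpF μ) (r : ℂ) := by
  have := hμ.prob
  obtain ⟨δ, hδ, hgap⟩ := fp_iso hμ hr
  have hnear : ∀ᶠ z : ℂ in 𝓝 (r : ℂ), ‖z - r‖ < δ / 2 := by
    have := Metric.ball_mem_nhds (r : ℂ) (show 0 < δ / 2 by positivity)
    filter_upwards [this] with z hz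
    simpa [dist_eq_norm] using hz
  have hnre : ∀ z : ℂ, ‖z - r‖ < δ / 2 → z.re ∈ Ioo (r - δ) (r + δ) := by
    intro z hz
    have h1 := Complex.abs_re_le_norm (z - r)
    rw [Complex.sub_re, Complex.ofReal_re] at h1
    have h2 := abs_lt.mp (lt_of_le_of_lt h1 hz)
    exact ⟨by linarith [h2.1], by linarith [h2.2]⟩
  by_cases hp : 0 < μ.real {r}
  · set p := μ.real {r} with hpdef
    have hg := fp_an_stT (μ.restrict {r}ᶜ) hδ hgap
    have hG : AnalyticAt ℂ (fun z : ℂ => (z - r) / ((p : ℂ) - (z - r) * stT (μ.restrict {r}ᶜ) z)) (r : ℂ) := by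
      have ha : AnalyticAt ℂ (fun z : ℂ => z - (r : ℂ)) (r : ℂ) := analyticAt_id.sub analyticAt_const
      refine ha.div (analyticAt_const.sub (ha.mul hg)) ?_
      simp only [sub_self, zero_mul, sub_zero]
      exact_mod_cast hp.ne'
    refine hG.congr ?_
    filter_upwards [hnear] with z hz
    by_cases hzr : z = r
    · rw [hzr]
      unfold fpF
      rw [if_pos ⟨by simp, by simpa using hp⟩]
      simp
    · unfold fpF
      rw [if_neg]
      · unfold nrT
        have hdec : stT μ z = p * ((r : ℂ) - z)⁻¹ + stT (μ.restrict {r}ᶜ) z := by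
          unfold stT
          have i1 := fp_int_gap (μ.restrict {r}ᶜ) hδ hgap hz
          have i2 : IntegrableOn (fun x : ℝ => ((x : ℂ) - z)⁻¹) {r} μ := by
            rw [integrableOn_singleton_iff]
            right; exact measure_lt_top _ _
          have i3 : Integrable (fun x : ℝ => ((x : ℂ) - z)⁻¹) μ := by
            rw [← integrableOn_univ, ← union_compl_self {r}]
            exact i2.union i1
          rw [← integral_add_compl (measurableSet_singleton r) i3]
          congr 1
          rw [integral_singleton]
          simp [hpdef]
        rw [hdec]
        have ha : z - r ≠ 0 := sub_ne_zero.mpr hzr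
        have h1 : (p : ℂ) * ((r : ℂ) - z)⁻¹ + stT (μ.restrict {r}ᶜ) z
            = -(((p : ℂ) - (z - r) * stT (μ.restrict {r}ᶜ) z) / (z - r)) := by
          have : (r : ℂ) - z = -(z - r) := by ring
          rw [this]
          field_simp
          ring
        rw [h1, inv_neg, neg_neg, inv_div]
      · rintro ⟨h1, h2⟩
        have hzz : z = (z.re : ℂ) := by apply Complex.ext <;> simp [h1]
        have : z.re ≠ r := by
          intro h; apply hzr; rw [hzz, h]
        rw [fp_no_atom_gap hgap (hnre z hz) this] at h2
        exact lt_irrefl _ h2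
  · have h0 : μ.real {r} = 0 := le_antisymm (not_lt.mp hp) measureReal_nonneg
    have hμ0 := fp_gap_of_nonatom hgap h0
    have hns : r ∉ msupp μ := fp_notMem_of_open ⟨by linarith, by linarith⟩ hμ0
    have hne : stT μ r ≠ 0 := by
      rw [fp_stT_real]
      intro h
      exact hr2 ⟨hns, by exact_mod_cast h⟩
    have hG : AnalyticAt ℂ (fun z : ℂ => -(stT μ z)⁻¹) (r : ℂ) := ((fp_an_stT μ hδ hμ0).inv hne).neg
    refine hG.congr ?_
    filter_upwards [hnear] with z hz
    unfold fpF
    rw [if_neg]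
    · rfl
    · rintro ⟨h1, h2⟩
      have : μ.real {z.re} = 0 := by
        rw [measureReal_def, measure_mono_null (singleton_subset_iff.mpr (hnre z hz)) hμ0]; simp
      rw [this] at h2
      exact lt_irrefl _ h2

/-- the real derivative of `fpF` -/
noncomputable def fpf (μ : Measure ℝ) (x : ℝ) : ℝ := (deriv (fpF μ) (x : ℂ)).re

theorem fp_f_deriv {μ : Measure ℝ} {r : ℝ} (h : AnalyticAt ℂ (fpF μ) (r : ℂ)) :
    HasDerivAt (fun x : ℝ => (fpF μ x).re) (fpf μ r) r :=
  h.differentiableAt.hasDerivAt.real_of_complex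

theorem fp_f_cont {μ : Measure ℝ} {r : ℝ} (h : AnalyticAt ℂ (fpF μ) (r : ℂ)) :
    ContinuousAt (fpf μ) r :=
  Complex.continuous_re.continuousAt.comp
    (ContinuousAt.comp (f := fun x : ℝ => (x : ℂ)) h.deriv.continuousAt Complex.continuous_ofReal.continuousAt)

theorem fp_F_lim {μ : Measure ℝ} {r : ℝ} (h : AnalyticAt ℂ (fpF μ) (r : ℂ)) :
    Tendsto (fun η : ℝ => nrT μ (r + η * Complex.I)) (𝓝[>] 0) (𝓝 (((fpF μ r).re : ℝ) : ℂ)) := by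
  rw [← fp_F_real]
  have h1 := h.continuousAt.tendsto.comp (fp_path r)
  refine h1.congr' ?_
  filter_upwards [fp_ev_pos] with η hη
  exact fp_F_up μ (by rw [fp_im]; exact hη)

theorem fp_J_lim {μ : Measure ℝ} {r : ℝ} (h : AnalyticAt ℂ (fpF μ) (r : ℂ)) :
    Tendsto (fun η : ℝ => fpJ μ (r + η * Complex.I)) (𝓝[>] 0) (𝓝 (fpf μ r)) := by
  have h1 := h.differentiableAt.hasDerivAt.tendsto_slope
  have hp : Tendsto (fun η : ℝ => (r : ℂ) + (η : ℂ) * Complex.I) (𝓝[>] 0) (𝓝[≠] (r : ℂ)) := by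
    refine tendsto_nhdsWithin_iff.mpr ⟨fp_path r, ?_⟩
    filter_upwards [fp_ev_pos] with η hη
    simp [hη.ne']
  have h2 := (Complex.continuous_re.tendsto _).comp (h1.comp hp)
  refine h2.congr' ?_
  filter_upwards [fp_ev_pos] with η hη
  simp only [Function.comp_apply]
  rw [slope_def_field, fp_F_up μ (by rw [fp_im]; exact hη), fp_F_real μ r]
  unfold fpJ
  rw [fp_im]
  have : (r : ℂ) + (η : ℂ) * Complex.I - r = (η : ℂ) * Complex.I := by ring
  rw [this, div_mul_eq_div_div, Complex.div_I]
  have e1 : (nrT μ (r + η * Complex.I) - ((fpF μ r).re : ℂ)) / (η : ℂ)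
    = ((η⁻¹ : ℝ) : ℂ) * (nrT μ (r + η * Complex.I) - ((fpF μ r).re : ℂ)) := by
    push_cast; ring
  rw [e1]
  simp
  ring

theorem fp_f_SP {μ : Measure ℝ} [IsProbabilityMeasure μ] {x y : ℝ} (hx : AnalyticAt ℂ (fpF μ) (x : ℂ))
    (hy : AnalyticAt ℂ (fpF μ) (y : ℂ)) :
    ((fpF μ x).re - (fpF μ y).re) ^ 2 ≤ (x - y) ^ 2 * (fpf μ x * fpf μ y) := by
  have h1 := (((fp_F_lim hx).sub (fp_F_lim hy)).norm).pow 2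
  have h2 := ((fp_J_lim hx).mul (fp_J_lim hy)).const_mul ((x - y) ^ 2)
  have h3 := le_of_tendsto_of_tendsto h1 h2 (by
    filter_upwards [fp_ev_pos] with η hη
    have := fp_SP μ (z := x + η * Complex.I) (w := y + η * Complex.I) (by rw [fp_im]; exact hη)
      (by rw [fp_im]; exact hη)
    refine this.trans (le_of_eq ?_)
    have e1 : (x : ℂ) + η * Complex.I - (y + η * Complex.I) = ((x - y : ℝ) : ℂ) := by push_cast; ring
    rw [e1, Complex.norm_real, Real.norm_eq_abs, sq_abs])
  rw [← Complex.ofReal_sub, Complex.norm_real, Real.norm_eq_abs, sq_abs] at h3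
  exact h3

theorem fp_f_nonneg {μ : Measure ℝ} [IsProbabilityMeasure μ] {x : ℝ} (hx : AnalyticAt ℂ (fpF μ) (x : ℂ)) :
    0 ≤ fpf μ x := by
  refine ge_of_tendsto (fp_J_lim hx) ?_
  filter_upwards [fp_ev_pos] with η hη
  exact fp_J_nonneg μ (by rw [fp_im]; exact hη)

theorem fp_f_le {μ : Measure ℝ} [IsProbabilityMeasure μ] {α β c : ℝ} (hc : 0 < c)
    (han : ∀ x ∈ Icc α β, AnalyticAt ℂ (fpF μ) (x : ℂ)) (hα : fpf μ α ≤ c) (hβ : fpf μ β ≤ c) :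
    ∀ x ∈ Icc α β, fpf μ x ≤ c := by
  intro x0 hx0
  by_contra hcon
  push Not at hcon
  have hcont : ContinuousOn (fpf μ) (Icc α β) := fun x hx => (fp_f_cont (han x hx)).continuousWithinAt
  set S1 := Icc α x0 ∩ fpf μ ⁻¹' Iic c with hS1
  set S2 := Icc x0 β ∩ fpf μ ⁻¹' Iic c with hS2
  have hc1 : IsCompact S1 :=
    isCompact_Icc.of_isClosed_subset ((hcont.mono (Icc_subset_Icc le_rfl hx0.2)).preimage_isClosed_of_isClosed
      isClosed_Icc isClosed_Iic) inter_subset_left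
  have hc2 : IsCompact S2 :=
    isCompact_Icc.of_isClosed_subset ((hcont.mono (Icc_subset_Icc hx0.1 le_rfl)).preimage_isClosed_of_isClosed
      isClosed_Icc isClosed_Iic) inter_subset_left
  have hn1 : S1.Nonempty := ⟨α, ⟨le_rfl, hx0.1⟩, hα⟩
  have hn2 : S2.Nonempty := ⟨β, ⟨hx0.2, le_rfl⟩, hβ⟩
  obtain ⟨p, hp, hpmax⟩ := hc1.exists_isGreatest hn1
  obtain ⟨q, hq, hqmin⟩ := hc2.exists_isLeast hn2
  have hpx : p < x0 := lt_of_le_of_ne hp.1.2 (by rintro rfl; exact absurd hp.2 (not_le.mpr hcon))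
  have hqx : x0 < q := lt_of_le_of_ne hq.1.1 (by rintro rfl; exact absurd hq.2 (not_le.mpr hcon))
  have hpq : p < q := hpx.trans hqx
  have hin : ∀ x ∈ Icc p q, x ∈ Icc α β := fun x hx => ⟨hp.1.1.trans hx.1, hx.2.trans hq.1.2⟩
  obtain ⟨ξ, hξ, hξe⟩ := exists_hasDerivAt_eq_slope (fun x : ℝ => (fpF μ x).re) (fpf μ) hpq
    (fun x hx => (fp_f_deriv (han x (hin x hx))).continuousAt.continuousWithinAt)
    (fun x hx => fp_f_deriv (han x (hin x (Ioo_subset_Icc_self hx))))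
  have hξc : c < fpf μ ξ := by
    by_contra h
    push Not at h
    rcases le_total ξ x0 with h1 | h1
    · exact absurd (hpmax ⟨⟨hp.1.1.trans hξ.1.le, h1⟩, h⟩) (not_le.mpr hξ.1)
    · exact absurd (hqmin ⟨⟨h1, hξ.2.le.trans hq.1.2⟩, h⟩) (not_le.mpr hξ.2)
  have hq' : q ∈ Icc α β := hin q ⟨hpq.le, le_rfl⟩
  have hp' : p ∈ Icc α β := hin p ⟨le_rfl, hpq.le⟩
  have hSP := fp_f_SP (han q hq') (han p hp')
  rw [hξe, lt_div_iff₀ (by linarith)] at hξc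
  have e1 : fpf μ q * fpf μ p ≤ c * c :=
    mul_le_mul hq.2 hp.2 (fp_f_nonneg (han p hp')) hc.le
  have e2 : 0 < c * (q - p) := by have : 0 < q - p := by linarith
                                  positivity
  have e3 : (c * (q - p)) ^ 2 < ((fpF μ q).re - (fpF μ p).re) ^ 2 := by gcongr
  have e4 : (q - p) ^ 2 * (fpf μ q * fpf μ p) ≤ (q - p) ^ 2 * (c * c) := by gcongr
  nlinarith

/-- real points where the derivative is below the threshold are values of `ω` -/
theorem fp_hit {μ : Measure ℝ} [IsProbabilityMeasure μ] {t : ℝ} (ht : 1 < t) {ω : ℂ → ℂ}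
    (hω : IsSubordT μ t ω) {x : ℝ} (hx : AnalyticAt ℂ (fpF μ) (x : ℂ)) (hf : fpf μ x < t / (t - 1)) :
    ω ((t * x - (t - 1) * (fpF μ x).re : ℝ) : ℂ) = x := by
  have h1 := (fp_J_lim hx).eventually_lt_const hf
  have h2 : Tendsto (fun η : ℝ => (t : ℂ) * (x + η * Complex.I) - (t - 1) * nrT μ (x + η * Complex.I)) (𝓝[>] 0)
      (𝓝[CUHP] ((t * x - (t - 1) * (fpF μ x).re : ℝ) : ℂ)) := by
    refine tendsto_nhdsWithin_iff.mpr ⟨?_, ?_⟩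
    · have := ((fp_path x).const_mul (t : ℂ)).sub ((fp_F_lim hx).const_mul ((t : ℂ) - 1))
      push_cast
      exact this
    · filter_upwards [h1, fp_ev_pos] with η hη hη2
      exact (fp_uniq ht hω (by rw [fp_im]; exact hη2) hη).1.le
  have h3 := (hω.cont ((t * x - (t - 1) * (fpF μ x).re : ℝ) : ℂ) (by simp [CUHP])).tendsto.comp h2
  have h4 := fp_path x
  refine tendsto_nhds_unique h3 (h4.congr' ?_)
  filter_upwards [h1, fp_ev_pos] with η hη hη2
  exact (fp_uniq ht hω (by rw [fp_im]; exact hη2) hη).2.symm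

theorem fp_K1 {μ : Measure ℝ} [IsProbabilityMeasure μ] {t : ℝ} (ht : 1 < t) {ω : ℂ → ℂ}
    (hω : IsSubordT μ t ω) {a b α β : ℝ} (hab : a < b) (hα : ω a = α) (hβ : ω b = β)
    (han : ∀ x ∈ Icc α β, AnalyticAt ℂ (fpF μ) (x : ℂ)) : ∃ e ∈ Ioo a b, (ω (e : ℝ)).im = 0 := by
  have ht1 : 0 < t - 1 := by linarith
  have hc : 0 < t / (t - 1) := div_pos (by linarith) ht1
  have hαβ : α < β := fp_C2 ht hω hα hβ hab
  have hα' : α ∈ Icc α β := ⟨le_rfl, hαβ.le⟩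
  have hβ' : β ∈ Icc α β := ⟨hαβ.le, le_rfl⟩
  have hfb : ∀ {e r : ℝ}, ω e = r → AnalyticAt ℂ (fpF μ) (r : ℂ) → fpf μ r ≤ t / (t - 1) ∧
      t * r - (t - 1) * (fpF μ r).re = e := by
    intro e r hr hanr
    constructor
    · refine le_of_tendsto (fp_J_lim hanr) ?_
      filter_upwards [fp_ev_pos] with η hη
      exact (fp_C ht hω hr hη).2
    · have h1 := tendsto_nhds_unique (fp_F_lim hanr) (fp_C_tend ht hω hr)
      have h2 : (fpF μ r).re = (t * r - e) / (t - 1) := by exact_mod_cast h1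
      rw [h2]; field_simp; ring
  obtain ⟨f1, e1⟩ := hfb hα (han α hα')
  obtain ⟨f2, e2⟩ := hfb hβ (han β hβ')
  have hle := fp_f_le hc han f1 f2
  have hder : ∀ x ∈ Icc α β, HasDerivAt (fun x : ℝ => t * x - (t - 1) * (fpF μ x).re)
      (t - (t - 1) * fpf μ x) x := by
    intro x hx
    have := ((hasDerivAt_id x).const_mul t).fun_sub ((fp_f_deriv (han x hx)).const_mul (t - 1))
    simp only [id_eq, mul_one] at this
    exact this
  obtain ⟨ξ, hξ, hξe⟩ := exists_hasDerivAt_eq_slope (fun x : ℝ => t * x - (t - 1) * (fpF μ x).re)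
    (fun x => t - (t - 1) * fpf μ x) hαβ
    (fun x hx => (hder x hx).continuousAt.continuousWithinAt)
    (fun x hx => hder x (Ioo_subset_Icc_self hx))
  have hξ' := Ioo_subset_Icc_self hξ
  have hfξ : fpf μ ξ < t / (t - 1) := by
    have h1 : 0 < (b - a) / (β - α) := div_pos (by linarith) (by linarith)
    simp only [e1, e2] at hξe
    rw [lt_div_iff₀ ht1]
    linarith
  have hhit := fp_hit ht hω (han ξ hξ') hfξ
  have hmono : MonotoneOn (fun x : ℝ => t * x - (t - 1) * (fpF μ x).re) (Icc α β) := by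
    refine monotoneOn_of_hasDerivWithinAt_nonneg (convex_Icc α β)
      (f' := fun x => t - (t - 1) * fpf μ x)
      (fun x hx => (hder x hx).continuousAt.continuousWithinAt) ?_ ?_
    · intro x hx
      exact (hder x (interior_subset hx)).hasDerivWithinAt
    · intro x hx
      have := hle x (interior_subset hx)
      rw [le_div_iff₀ ht1] at this
      linarith
  have m1 := hmono hα' hξ' hξ.1.le
  have m2 := hmono hξ' hβ' hξ.2.le
  simp only [e1, e2] at m1 m2
  refine ⟨t * ξ - (t - 1) * (fpF μ ξ).re, ⟨lt_of_le_of_ne m1 ?_, lt_of_le_of_ne m2 ?_⟩, ?_⟩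
  · intro h
    rw [← h, hα] at hhit
    have : α = ξ := by exact_mod_cast hhit
    exact hξ.1.ne this
  · intro h
    rw [h, hβ] at hhit
    have : β = ξ := by exact_mod_cast hhit
    exact hξ.2.ne this.symm
  · rw [hhit]; simp

theorem fp_K2 {μ : Measure ℝ} [IsProbabilityMeasure μ] {t : ℝ} (ht : 1 < t) {ω : ℂ → ℂ}
    (hω : IsSubordT μ t ω) {s s' r r' : ℝ} (hs : ω s = r) (hs' : ω s' = r')
    (han : ∀ x ∈ Icc r r', AnalyticAt ℂ (fpF μ) (x : ℂ)) : ∀ e ∈ Ioo s s', (ω (e : ℝ)).im = 0 := by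
  intro e0 he0
  by_contra hne
  have hcl : IsClosed {e : ℝ | (ω e).im = 0} :=
    isClosed_singleton.preimage (Complex.continuous_im.comp (fp_om_cont hω))
  have hc1 : IsCompact (Icc s e0 ∩ {e : ℝ | (ω e).im = 0}) := isCompact_Icc.inter_right hcl
  have hc2 : IsCompact (Icc e0 s' ∩ {e : ℝ | (ω e).im = 0}) := isCompact_Icc.inter_right hcl
  obtain ⟨a, ha, hamax⟩ := hc1.exists_isGreatest ⟨s, ⟨le_rfl, he0.1.le⟩, by simp [hs]⟩
  obtain ⟨b, hb, hbmin⟩ := hc2.exists_isLeast ⟨s', ⟨he0.2.le, le_rfl⟩, by simp [hs']⟩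
  have ha0 : a < e0 := lt_of_le_of_ne ha.1.2 (by rintro rfl; exact hne ha.2)
  have hb0 : e0 < b := lt_of_le_of_ne hb.1.1 (by rintro rfl; exact hne hb.2)
  have hra := fp_real (μ := μ) ha.2
  have hrb := fp_real (μ := μ) hb.2
  have h1 : r ≤ (ω a).re := by
    rcases ha.1.1.eq_or_lt with h | h
    · rw [← h, hs]; simp
    · exact (fp_C2 ht hω hs hra h).le
  have h2 : (ω b).re ≤ r' := by
    rcases hb.1.2.eq_or_lt with h | h
    · rw [h, hs']; simp
    · exact (fp_C2 ht hω hrb hs' h).le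
  obtain ⟨e, he, hei⟩ := fp_K1 ht hω (ha0.trans hb0) hra hrb
    (fun x hx => han x ⟨h1.trans hx.1, hx.2.trans h2⟩)
  rcases le_total e e0 with h | h
  · exact absurd (hamax ⟨⟨ha.1.1.trans he.1.le, h⟩, hei⟩) (not_le.mpr he.1)
  · exact absurd (hbmin ⟨⟨h, he.2.le.trans hb.1.2⟩, hei⟩) (not_le.mpr he.2)


theorem fp_ae_msupp (ν : Measure ℝ) : ∀ᵐ x ∂ν, x ∈ msupp ν := by
  have : ν (msupp ν)ᶜ = 0 := by
    refine measure_null_of_locally_null _ fun x hx => ?_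
    obtain ⟨ε, hε, h⟩ := fp_notMem_msupp hx
    exact ⟨Ioo (x - ε) (x + ε), mem_nhdsWithin_of_mem_nhds (Ioo_mem_nhds (by linarith) (by linarith)), h⟩
  simpa using measure_eq_zero_iff_ae_notMem.mp this

theorem fp_msupp_mono {ν ν' : Measure ℝ} (h : ν ≤ ν') : msupp ν ⊆ msupp ν' :=
  fun _ hx ε hε => (hx ε hε).trans_le (h _)

theorem fp_msupp_ac (ν : Measure ℝ) : msupp (acPart ν) ⊆ msupp ν := fp_msupp_mono (fp_acPart_le ν)

theorem fp_rad {μ : Measure ℝ} (h : IsCompact (msupp μ)) : ∃ R > 0, ∀ x ∈ msupp μ, |x| ≤ R := by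
  obtain ⟨R, hR⟩ := h.isBounded.exists_norm_le
  exact ⟨max R 1, by positivity, fun x hx => (hR x hx).trans (le_max_left _ _)⟩

theorem fp_int_real (ν : Measure ℝ) [IsFiniteMeasure ν] {r : ℝ} (hr : r ∉ msupp ν) :
    Integrable (fun x : ℝ => (x - r)⁻¹) ν := by
  obtain ⟨δ, hδ, h⟩ := fp_notMem_msupp hr
  have h1 := fp_int_gap ν hδ h (z := (r : ℂ)) (by simp [hδ])
  have h2 := h1.re
  refine h2.congr (Eventually.of_forall fun x => ?_)
  simp only
  change (((x : ℂ) - (r : ℂ))⁻¹).re = _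
  rw [← Complex.ofReal_sub, ← Complex.ofReal_inv, Complex.ofReal_re]

/-- no real value of the subordination function is a zero of the transform -/
theorem fp_notZ {μ : Measure ℝ} [IsProbabilityMeasure μ] {t : ℝ} (ht : 1 < t) {ω : ℂ → ℂ}
    (hω : IsSubordT μ t ω) {e r : ℝ} (hr : ω e = r) : ¬ (r ∉ msupp μ ∧ stTR μ r = 0) := by
  rintro ⟨h1, h2⟩
  obtain ⟨δ, hδ, h⟩ := fp_notMem_msupp h1
  have h3 := (fp_an_stT μ hδ h).continuousAt.tendsto.comp (fp_path r)
  have h4 := (fp_C_tend ht hω hr).mul h3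
  rw [fp_stT_real, h2, Complex.ofReal_zero, mul_zero] at h4
  have h5 : Tendsto (fun _ : ℝ => (-1 : ℂ)) (𝓝[>] (0 : ℝ)) (𝓝 0) := by
    refine h4.congr' ?_
    filter_upwards [fp_ev_pos] with η hη
    have := fp_stT_ne μ (z := r + η * Complex.I) (by rw [fp_im]; exact hη)
    simp only [nrT, Function.comp_apply]
    field_simp
  have h6 := tendsto_nhds_unique h5 tendsto_const_nhds
  simp at h6

theorem fp_far {μ : Measure ℝ} {nac npp nppout : ℕ} {Em Ep : Fin nac → ℝ} {atom : Fin npp → ℝ}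
    {ρ : ℝ → ℝ} (hμ : Assumption1 μ nac npp nppout Em Ep atom ρ) {t : ℝ} (ht : 1 < t) {ω : ℂ → ℂ}
    (hω : IsSubordT μ t ω) {σ : ℝ} (hσ : σ = 1 ∨ σ = -1) (L : ℝ) :
    ∃ e r : ℝ, ω e = r ∧ L < σ * e ∧ r ∉ msupp μ := by
  have := hμ.prob
  have ht1 : 0 < t - 1 := by linarith
  have hc : 0 < t / (t - 1) - 1 := by
    have : t / (t - 1) - 1 = 1 / (t - 1) := by field_simp; ring
    rw [this]; positivity
  obtain ⟨R, hR, hsupp⟩ := fp_rad hμ.compact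
  set c := t / (t - 1) with hcdef
  set u := min 1 ((c - 1) / 4) with hu
  have hu0 : 0 < u := lt_min one_pos (by positivity)
  have hu1 : u ≤ 1 := min_le_left _ _
  have hu2 : u ≤ (c - 1) / 4 := min_le_right _ _
  set d := max (R + 2 * R / u) (|L| + (t - 1) * R + 1) with hd
  have hd1 : R + 2 * R / u ≤ d := le_max_left _ _
  have hd2 : |L| + (t - 1) * R + 1 ≤ d := le_max_right _ _
  have hdR : R < d := by
    have : 0 < 2 * R / u := by positivity
    linarith
  have hratio : d + R ≤ (1 + u) * (d - R) := by
    have : 2 * R / u ≤ d - R := by linarith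
    rw [div_le_iff₀ hu0] at this
    linarith
  have hσσ : σ * σ = 1 := by rcases hσ with h | h <;> rw [h] <;> norm_num
  have hσ0 : σ ≠ 0 := by rcases hσ with h | h <;> rw [h] <;> norm_num
  have hσabs : |σ| = 1 := by rcases hσ with h | h <;> rw [h] <;> norm_num
  set r := σ * d with hr
  have hrn : r ∉ msupp μ := by
    intro h
    have := hsupp r h
    rw [hr, abs_mul, hσabs, one_mul, abs_of_pos (by linarith)] at this
    linarith
  have hxb : ∀ x ∈ msupp μ, d - R ≤ d - σ * x ∧ d - σ * x ≤ d + R := by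
    intro x hx
    have h1 := hsupp x hx
    have h2 : |σ * x| ≤ R := by rw [abs_mul, hσabs, one_mul]; exact h1
    have := abs_le.mp h2
    exact ⟨by linarith [this.2], by linarith [this.1]⟩
  have hinv : ∀ x, (x - r)⁻¹ = -σ * (d - σ * x)⁻¹ := by
    intro x
    have : x - r = (-σ) * (d - σ * x) := by rw [hr]; linear_combination (-x) * hσσ
    rw [this, mul_inv]
    congr 1
    rcases hσ with h | h <;> rw [h] <;> norm_num
  set I0 := ∫ x, (d - σ * x)⁻¹ ∂μ with hI0
  have hst : stTR μ r = -σ * I0 := by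
    unfold stTR
    simp only [hinv]
    rw [integral_const_mul]
  have hi0 : Integrable (fun x => (d - σ * x)⁻¹) μ := by
    have := (fp_int_real μ hrn).const_mul (-σ)
    refine this.congr (Eventually.of_forall fun x => ?_)
    simp only [hinv]
    rw [← mul_assoc]
    have : -σ * -σ = 1 := by linarith
    rw [this, one_mul]
  have hlow : (d + R)⁻¹ ≤ I0 := by
    have : (d + R)⁻¹ = ∫ x, (d + R)⁻¹ ∂μ := by simp
    rw [this]
    refine integral_mono_ae (integrable_const _) hi0 ?_
    filter_upwards [fp_ae_msupp μ] with x hx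
    have := hxb x hx
    exact inv_anti₀ (by linarith) this.2
  have hI0pos : 0 < I0 := lt_of_lt_of_le (by have : 0 < d + R := by linarith
                                             positivity) hlow
  have hne : stTR μ r ≠ 0 := by
    rw [hst]; exact mul_ne_zero (neg_ne_zero.mpr hσ0) hI0pos.ne'
  have han : AnalyticAt ℂ (fpF μ) (r : ℂ) :=
    fp_Fan hμ (fun h => hrn (fp_msupp_ac μ h)) (fun h => hne h.2)
  have hFr : (fpF μ r).re = σ / I0 := by
    obtain ⟨δ, hδ, h⟩ := fp_notMem_msupp hrn
    have h0 : μ.real {r} = 0 := by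
      rw [measureReal_def, measure_mono_null (singleton_subset_iff.mpr (show r ∈ Ioo (r - δ) (r + δ) from
        ⟨by linarith, by linarith⟩)) h]; simp
    unfold fpF
    rw [if_neg (by rintro ⟨_, h2⟩; rw [Complex.ofReal_re, h0] at h2; exact lt_irrefl _ h2)]
    unfold nrT
    rw [fp_stT_real, ← Complex.ofReal_inv, ← Complex.ofReal_neg, Complex.ofReal_re, hst]
    rcases hσ with h | h <;> rw [h] <;> field_simp
  -- derivative bound
  have hf : fpf μ r < c := by
    obtain ⟨δ, hδ, hgap⟩ := fp_notMem_msupp hrn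
    have h1 := (((fp_an_stT μ hδ hgap).continuousAt.tendsto.comp (fp_path r)).norm).pow 2
    have h2 := (fp_J_lim han).mul h1
    have h3 := le_of_tendsto h2 (b := ((d - R) ^ 2)⁻¹) (by
      filter_upwards [fp_ev_pos] with η hη
      have hzi : 0 < ((r : ℂ) + (η : ℂ) * Complex.I).im := by rw [fp_im]; exact hη
      have hn := norm_pos_iff.mpr (fp_stT_ne μ hzi)
      rw [fp_J_eq μ hzi]
      simp only [Function.comp_apply]
      rw [div_mul_cancel₀ _ (by positivity)]
      have : ((d - R) ^ 2)⁻¹ = ∫ x, ((d - R) ^ 2)⁻¹ ∂μ := by simp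
      rw [this]
      unfold Ifun
      refine integral_mono_ae (fp_int_sq μ hzi.ne') (integrable_const _) ?_
      filter_upwards [fp_ae_msupp μ] with x hx
      have hx' := hxb x hx
      have hdR' : 0 < d - R := by linarith
      refine inv_anti₀ (by positivity) ?_
      have e1 : Complex.normSq ((x : ℂ) - (r + (η : ℂ) * Complex.I)) = (x - r) ^ 2 + η ^ 2 := by
        rw [Complex.normSq_apply, Complex.sub_re, Complex.sub_im, fp_im, Complex.add_re,
            Complex.re_ofReal_mul, Complex.I_re, Complex.ofReal_re, Complex.ofReal_re, Complex.ofReal_im]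
        ring
      have e2 : (x - r) ^ 2 = (d - σ * x) ^ 2 := by
        rw [hr]; linear_combination (d ^ 2 - x ^ 2) * hσσ
      rw [e1, e2]
      have : (d - R) ^ 2 ≤ (d - σ * x) ^ 2 := by exact pow_le_pow_left₀ hdR'.le hx'.1 2
      nlinarith [sq_nonneg η])
    rw [fp_stT_real, Complex.norm_real, Real.norm_eq_abs, sq_abs, hst] at h3
    have e3 : (-σ * I0) ^ 2 = I0 ^ 2 := by linear_combination I0 ^ 2 * hσσ
    rw [e3] at h3
    have hf0 := fp_f_nonneg han
    have hdR' : 0 < d - R := by linarith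
    have hdR2 : 0 < d + R := by linarith
    have e4 : fpf μ r * ((d + R)⁻¹) ^ 2 ≤ ((d - R) ^ 2)⁻¹ := by
      refine le_trans ?_ h3
      gcongr
    rw [inv_pow, ← div_eq_mul_inv, div_le_iff₀ (by positivity), ← div_eq_inv_mul] at e4
    have e5 : (d + R) ^ 2 / (d - R) ^ 2 ≤ (1 + u) ^ 2 := by
      rw [div_le_iff₀ (by positivity), ← mul_pow]
      gcongr
    nlinarith
  refine ⟨t * r - (t - 1) * (fpF μ r).re, r, fp_hit ht hω han hf, ?_, hrn⟩
  rw [hFr, hr]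
  have e1 : σ * (t * (σ * d) - (t - 1) * (σ / I0)) = t * d - (t - 1) * (1 / I0) := by
    linear_combination (t * d - (t - 1) * (1 / I0)) * hσσ
  rw [e1]
  have hdR2 : 0 < d + R := by linarith
  have e2 : 1 / I0 ≤ d + R := by
    rw [div_le_iff₀ hI0pos]
    have := mul_le_mul_of_nonneg_left hlow hdR2.le
    rw [mul_inv_cancel₀ hdR2.ne'] at this
    exact this
  have := mul_le_mul_of_nonneg_left e2 ht1.le
  have := le_abs_self L
  nlinarith

theorem fp_gapmono {μ : Measure ℝ} [IsProbabilityMeasure μ] {x y : ℝ} (hxy : x < y)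
    (h : ∀ u ∈ Icc x y, u ∉ msupp μ) : stTR μ x < stTR μ y := by
  have hx := fp_int_real μ (h x ⟨le_rfl, hxy.le⟩)
  have hy := fp_int_real μ (h y ⟨hxy.le, le_rfl⟩)
  rw [← sub_pos]
  unfold stTR
  rw [← integral_sub hy hx]
  have hpos : ∀ u ∈ msupp μ, 0 < (u - y)⁻¹ - (u - x)⁻¹ := by
    intro u hu
    have h1 : u < x ∨ y < u := by
      by_contra hcon
      push Not at hcon
      exact h u ⟨hcon.1, hcon.2⟩ hu
    rcases h1 with h1 | h1
    · have a1 : u - x < 0 := by linarith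
      have a2 : u - y < 0 := by linarith
      rw [inv_sub_inv a2.ne a1.ne]
      exact div_pos (by linarith) (mul_pos_of_neg_of_neg a2 a1)
    · have a1 : 0 < u - x := by linarith
      have a2 : 0 < u - y := by linarith
      rw [inv_sub_inv a2.ne' a1.ne']
      exact div_pos (by linarith) (mul_pos a2 a1)
  rw [integral_pos_iff_support_of_nonneg_ae]
  · refine lt_of_lt_of_le ?_ (measure_mono (?_ : msupp μ ⊆ _))
    · have : μ (msupp μ) = 1 := prob_compl_eq_zero_iff (fp_msupp_closed μ).measurableSet |>.mp (by
        have := fp_ae_msupp μ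
        exact this)
      rw [this]; exact one_pos
    · intro u hu
      exact (hpos u hu).ne'
  · filter_upwards [fp_ae_msupp μ] with u hu
    exact (hpos u hu).le
  · exact hy.sub hx

theorem fp_oneside {μ : Measure ℝ} [IsProbabilityMeasure μ] {z : ℝ} (hz : z ∉ msupp μ) (h0 : stTR μ z = 0) :
    (∃ u ∈ msupp μ, u < z) ∧ ∃ u ∈ msupp μ, z < u := by
  have hi := fp_int_real μ hz
  have hone : μ (msupp μ) = 1 := prob_compl_eq_zero_iff (fp_msupp_closed μ).measurableSet |>.mp (by
        have := fp_ae_msupp μ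
        exact this)
  constructor
  · by_contra hcon
    push Not at hcon
    have hpos : ∀ u ∈ msupp μ, 0 < (u - z)⁻¹ := by
      intro u hu
      have := lt_of_le_of_ne (hcon u hu) (by rintro rfl; exact hz hu)
      exact inv_pos.mpr (by linarith)
    have : 0 < stTR μ z := by
      unfold stTR
      rw [integral_pos_iff_support_of_nonneg_ae _ hi]
      · refine lt_of_lt_of_le ?_ (measure_mono (?_ : msupp μ ⊆ _))
        · rw [hone]; exact one_pos
        · intro u hu
          exact (hpos u hu).ne'
      · filter_upwards [fp_ae_msupp μ] with u hu
        exact (hpos u hu).le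
    linarith
  · by_contra hcon
    push Not at hcon
    have hpos : ∀ u ∈ msupp μ, 0 < -(u - z)⁻¹ := by
      intro u hu
      have := lt_of_le_of_ne (hcon u hu) (by rintro rfl; exact hz hu)
      rw [neg_pos]
      exact inv_lt_zero.mpr (by linarith)
    have : 0 < -stTR μ z := by
      unfold stTR
      have hi2 : Integrable (fun x : ℝ => -(x - z)⁻¹) μ := hi.neg
      rw [← integral_neg, integral_pos_iff_support_of_nonneg_ae _ hi2]
      · refine lt_of_lt_of_le ?_ (measure_mono (?_ : msupp μ ⊆ _))
        · rw [hone]; exact one_pos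
        · intro u hu
          exact (hpos u hu).ne'
      · filter_upwards [fp_ae_msupp μ] with u hu
        exact (hpos u hu).le
    linarith


theorem fp_cnt (Rep S : Finset ℝ) (g : ℝ → ℝ) (h1 : ∀ s ∈ S, ∃ x ∈ Rep, g s < x)
    (h2 : ∀ s ∈ S, ∀ s' ∈ S, s < s' → ∃ x ∈ Rep, g s < x ∧ x ≤ g s') : S.card ≤ Rep.card := by
  classical
  have hex : ∀ s : ℝ, ∃ y : ℝ, s ∈ S → (y ∈ Rep ∧ g s < y ∧ ∀ x ∈ Rep, g s < x → y ≤ x) := by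
    intro s
    by_cases hs : s ∈ S
    · have hne : (Rep.filter fun x => g s < x).Nonempty := by
        obtain ⟨x, hx, hx2⟩ := h1 s hs
        exact ⟨x, Finset.mem_filter.mpr ⟨hx, hx2⟩⟩
      obtain ⟨y, hy, hmin⟩ := Finset.exists_min_image _ id hne
      rw [Finset.mem_filter] at hy
      exact ⟨y, fun _ => ⟨hy.1, hy.2, fun x hx hx2 => hmin x (Finset.mem_filter.mpr ⟨hx, hx2⟩)⟩⟩
    · exact ⟨0, fun h => absurd h hs⟩
  choose f hf using hex
  have hlt : ∀ s ∈ S, ∀ s' ∈ S, s < s' → f s < f s' := by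
    intro s hs s' hs' hss
    obtain ⟨x, hx, hx1, hx2⟩ := h2 s hs s' hs' hss
    exact lt_of_le_of_lt ((hf s hs).2.2 x hx hx1) (lt_of_le_of_lt hx2 (hf s' hs').2.1)
  refine Finset.card_le_card_of_injOn f (fun s hs => (hf s hs).1) ?_
  intro s hs s' hs' hss
  rcases lt_trichotomy s s' with h | h | h
  · exact absurd hss (hlt s hs s' hs' h).ne
  · exact h
  · exact absurd hss (hlt s' hs' s hs h).ne'

theorem fp_supp_cases {μ : Measure ℝ} {nac npp nppout : ℕ} {Em Ep : Fin nac → ℝ} {atom : Fin npp → ℝ}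
    {ρ : ℝ → ℝ} (hμ : Assumption1 μ nac npp nppout Em Ep atom ρ) {x : ℝ} (hx : x ∈ msupp μ) :
    (∃ j, x ∈ Icc (Em j) (Ep j)) ∨ ∃ i, atom i = x ∧ atom i ∉ msupp (acPart μ) := by
  have := hμ.prob
  by_cases h : x ∈ msupp (acPart μ)
  · left
    rw [hμ.supp_ac] at h
    exact mem_iUnion.mp h
  · right
    obtain ⟨δ, hδ, hgap⟩ := fp_iso hμ h
    have hp : 0 < μ.real {x} := by
      by_contra hcon
      have h0 : μ.real {x} = 0 := le_antisymm (not_lt.mp hcon) measureReal_nonneg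
      exact fp_notMem_of_open ⟨by linarith, by linarith⟩ (fp_gap_of_nonatom hgap h0) hx
    obtain ⟨i, hi⟩ := fp_atoms hμ hp
    exact ⟨i, hi, by rw [hi]; exact h⟩

theorem fp_block_supp {μ : Measure ℝ} {nac npp nppout : ℕ} {Em Ep : Fin nac → ℝ} {atom : Fin npp → ℝ}
    {ρ : ℝ → ℝ} (hμ : Assumption1 μ nac npp nppout Em Ep atom ρ) {x : ℝ} {j : Fin nac}
    (hx : x ∈ Icc (Em j) (Ep j)) : x ∈ msupp (acPart μ) := by
  rw [hμ.supp_ac]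
  exact mem_iUnion.mpr ⟨j, hx⟩

theorem fp_atom_supp {μ : Measure ℝ} {nac npp nppout : ℕ} {Em Ep : Fin nac → ℝ} {atom : Fin npp → ℝ}
    {ρ : ℝ → ℝ} (hμ : Assumption1 μ nac npp nppout Em Ep atom ρ) (i : Fin npp) : atom i ∈ msupp μ := by
  intro ε hε
  exact (hμ.atom_pos i).trans_le (measure_mono (singleton_subset_iff.mpr ⟨by linarith, by linarith⟩))

theorem fp_Zcount {μ : Measure ℝ} {nac npp nppout : ℕ} {Em Ep : Fin nac → ℝ} {atom : Fin npp → ℝ}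
    {ρ : ℝ → ℝ} (hμ : Assumption1 μ nac npp nppout Em Ep atom ρ) (B : Finset ℝ)
    (hB : ∀ z ∈ B, z ∉ msupp μ ∧ stTR μ z = 0) : B.card + 1 ≤ nac + nppout := by
  classical
  have := hμ.prob
  set Rep : Finset ℝ := Finset.univ.image Em ∪
    (Finset.univ.filter fun i => atom i ∉ msupp (acPart μ)).image atom with hRep
  have hcard : Rep.card ≤ nac + nppout := by
    refine (Finset.card_union_le _ _).trans (add_le_add ?_ ?_)
    · exact Finset.card_image_le.trans (by simp)
    · refine Finset.card_image_le.trans ?_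
      rw [← hμ.out_card, Nat.card_eq_fintype_card, Fintype.card_subtype]
  have hmemE : ∀ j, Em j ∈ Rep := fun j =>
    Finset.mem_union_left _ (Finset.mem_image_of_mem _ (Finset.mem_univ j))
  have hmemA : ∀ i, atom i ∉ msupp (acPart μ) → atom i ∈ Rep := fun i hi =>
    Finset.mem_union_right _ (Finset.mem_image_of_mem _ (Finset.mem_filter.mpr ⟨Finset.mem_univ i, hi⟩))
  have hnoblock : ∀ z ∈ B, ∀ j, z ∉ Icc (Em j) (Ep j) := fun z hz j h =>
    (hB z hz).1 (fp_msupp_ac μ (fp_block_supp hμ h))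
  have hRne : Rep.Nonempty := ⟨Em ⟨0, hμ.nac_pos⟩, hmemE _⟩
  obtain ⟨x0, hx0, hx0min⟩ := Finset.exists_min_image Rep id hRne
  simp only [id_eq] at hx0min
  have hx0z : ∀ z ∈ B, x0 ≤ z := by
    intro z hz
    obtain ⟨u, hu, huz⟩ := (fp_oneside (hB z hz).1 (hB z hz).2).1
    rcases fp_supp_cases hμ hu with ⟨j, hj⟩ | ⟨i, hi, hio⟩
    · exact (hx0min _ (hmemE j)).trans (hj.1.trans huz.le)
    · have := hx0min _ (hmemA i hio)
      linarith
  have key := fp_cnt (Rep.erase x0) B id ?_ ?_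
  · rw [Finset.card_erase_of_mem hx0] at key
    have := Finset.card_pos.mpr hRne
    omega
  · intro z hz
    obtain ⟨u, hu, huz⟩ := (fp_oneside (hB z hz).1 (hB z hz).2).2
    have h0 := hx0z z hz
    simp only [id_eq]
    rcases fp_supp_cases hμ hu with ⟨j, hj⟩ | ⟨i, hi, hio⟩
    · have h1 : z < Em j := by
        by_contra hcon
        push Not at hcon
        exact hnoblock z hz j ⟨hcon, huz.le.trans hj.2⟩
      exact ⟨Em j, Finset.mem_erase.mpr ⟨by linarith, hmemE j⟩, h1⟩
    · exact ⟨atom i, Finset.mem_erase.mpr ⟨by linarith, hmemA i hio⟩, by linarith⟩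
  · intro z hz z' hz' hzz
    simp only [id_eq]
    by_contra hcon
    push Not at hcon
    have h0 := hx0z z hz
    have hcon2 : ∀ x ∈ Rep, z < x → z' < x := fun x hx hx2 =>
      hcon x (Finset.mem_erase.mpr ⟨by linarith, hx⟩) hx2
    have hgap : ∀ u ∈ Icc z z', u ∉ msupp μ := by
      intro u hu hus
      rcases fp_supp_cases hμ hus with ⟨j, hj⟩ | ⟨i, hi, hio⟩
      · by_cases h1 : z < Em j
        · have := hcon2 _ (hmemE j) h1
          linarith [hj.1, hu.2]
        · push Not at h1
          exact hnoblock z hz j ⟨h1, hu.1.trans hj.2⟩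
      · have h1 : z < atom i := by
          rw [hi]
          refine lt_of_le_of_ne hu.1 ?_
          rintro rfl
          exact (hB z hz).1 hus
        have := hcon2 _ (hmemA i hio) h1
        rw [hi] at this
        linarith [hu.2]
    have := fp_gapmono hzz hgap
    rw [(hB z hz).2, (hB z' hz').2] at this
    exact lt_irrefl _ this

theorem fp_claim {μ μt : Measure ℝ} {nac npp nppout : ℕ} {Em Ep : Fin nac → ℝ} {atom : Fin npp → ℝ}
    {ρ : ℝ → ℝ} (hμ : Assumption1 μ nac npp nppout Em Ep atom ρ) {t : ℝ} (ht : 1 < t) {ω : ℂ → ℂ}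
    (hω : IsSubordT μ t ω) (hμt : IsFreePow μ ω μt) {s s' r r' k : ℝ} (hs : ω s = r) (hs' : ω s' = r')
    (hr : r ∉ msupp (acPart μ)) (hk : k ∈ msupp (acPart μt)) (hsk : s < k) (hks : k < s') :
    ∃ x, ((∃ j, Em j = x) ∨ (x ∉ msupp μ ∧ stTR μ x = 0)) ∧ r < x ∧ x ≤ r' := by
  have := hμ.prob
  by_contra hcon
  push Not at hcon
  have han : ∀ x ∈ Icc r r', AnalyticAt ℂ (fpF μ) (x : ℂ) := by
    intro x hx
    refine fp_Fan hμ ?_ ?_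
    · intro hxm
      rw [hμ.supp_ac] at hxm
      obtain ⟨j, hj⟩ := mem_iUnion.mp hxm
      by_cases h1 : r < Em j
      · have := hcon (Em j) (Or.inl ⟨j, rfl⟩) h1
        linarith [hj.1, hx.2]
      · push Not at h1
        exact hr (fp_block_supp hμ ⟨h1, hx.1.trans hj.2⟩)
    · intro hz
      rcases hx.1.eq_or_lt with h | h
      · rw [← h] at hz
        exact fp_notZ ht hω hs hz
      · have := hcon x (Or.inr hz) h
        linarith [hx.2]
  have h1 := fp_K2 ht hω hs hs' han
  have h2 := (fp_B ht hω hμt (fp_hfin hμ) h1).2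
  exact fp_notMem_of_open ⟨hsk, hks⟩ h2 hk

theorem fp_good {μ μt : Measure ℝ} {nac npp nppout : ℕ} {Em Ep : Fin nac → ℝ} {atom : Fin npp → ℝ}
    {ρ : ℝ → ℝ} (hμ : Assumption1 μ nac npp nppout Em Ep atom ρ) {t : ℝ} (ht : 1 < t) {ω : ℂ → ℂ}
    (hω : IsSubordT μ t ω) (hμt : IsFreePow μ ω μt) {y : ℝ} (hy : y ∉ msupp (acPart μt)) :
    (ω y).im = 0 ∧ (ω y).re ∉ msupp (acPart μ) := by
  have him : (ω y).im = 0 := by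
    by_contra h
    exact hy (fp_A ht hω hμt h)
  refine ⟨him, ?_⟩
  intro h
  rw [hμ.supp_ac] at h
  obtain ⟨j, hj⟩ := mem_iUnion.mp h
  exact hy (fp_block_mem hμ ht hω hμt j hj him)

theorem fp_van_real {μ μt : Measure ℝ} {t : ℝ} (ht : 1 < t) {ω : ℂ → ℂ}
    (hω : IsSubordT μ t ω) (hμt : IsFreePow μ ω μt) {e : ℝ} (hv : densityVanishesAt μt e) :
    (ω e).im = 0 := by
  by_contra he
  have ht1 : 0 < t - 1 := by linarith
  have he0 : 0 < (ω e).im := lt_of_le_of_ne (fp_om_real_nonneg hω e) (Ne.symm he)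
  have hQim : ((t : ℂ) * ω e - e).im = t * (ω e).im := by simp
  have hpos : 0 < t * (ω e).im := mul_pos (by linarith) he0
  have hQ0 : (t : ℂ) * ω e - e ≠ 0 := by
    intro h
    rw [h, Complex.zero_im] at hQim
    linarith
  have h1 := (Complex.continuous_im.tendsto _).comp (fp_M_tend ht hω hμt e hQ0)
  have h2 := tendsto_nhds_unique hv h1
  have h3 : (-((t : ℂ) - 1) / ((t : ℂ) * ω e - e)).im = (t - 1) * (t * (ω e).im) / Complex.normSq ((t : ℂ) * ω e - e) := by
    have e1 : -((t : ℂ) - 1) / ((t : ℂ) * ω e - e) = ((-(t - 1) : ℝ) : ℂ) * ((t : ℂ) * ω e - e)⁻¹ := by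
      push_cast; ring
    rw [e1, Complex.im_ofReal_mul, Complex.inv_im, hQim]
    ring
  rw [h3] at h2
  have : 0 < (t - 1) * (t * (ω e).im) / Complex.normSq ((t : ℂ) * ω e - e) :=
    div_pos (by positivity) (Complex.normSq_pos.mpr hQ0)
  linarith

theorem fp_van_good {μ μt : Measure ℝ} {nac npp nppout : ℕ} {Em Ep : Fin nac → ℝ} {atom : Fin npp → ℝ}
    {ρ : ℝ → ℝ} (hμ : Assumption1 μ nac npp nppout Em Ep atom ρ) {t : ℝ} (ht : 1 < t) {ω : ℂ → ℂ}
    (hω : IsSubordT μ t ω) (hμt : IsFreePow μ ω μt) {y : ℝ} (hy : densityVanishesAt μt y) :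
    (ω y).im = 0 ∧ (ω y).re ∉ msupp (acPart μ) := by
  have := hμ.prob
  have him := fp_van_real ht hω hμt hy
  refine ⟨him, ?_⟩
  intro h
  rw [hμ.supp_ac] at h
  obtain ⟨j, hj⟩ := mem_iUnion.mp h
  have hr := fp_real (μ := μ) him
  have hp := (fp_block hμ ht hω hr j hj).1
  have he := fp_atom_e ht hω hr hp
  exact not_tendsto_nhds_of_tendsto_atTop (fp_D_div ht hω hμt hr he) _ hy

theorem fp_Scount {μ μt : Measure ℝ} {nac npp nppout : ℕ} {Em Ep : Fin nac → ℝ} {atom : Fin npp → ℝ}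
    {ρ : ℝ → ℝ} (hμ : Assumption1 μ nac npp nppout Em Ep atom ρ) {t : ℝ} (ht : 1 < t) {ω : ℂ → ℂ}
    (hω : IsSubordT μ t ω) (hμt : IsFreePow μ ω μt) (Z : Finset ℝ)
    (hZ : ∀ z, z ∈ Z ↔ z ∉ msupp μ ∧ stTR μ z = 0) (S : Finset ℝ)
    (hS : ∀ s ∈ S, (ω (s : ℝ)).im = 0 ∧ (ω (s : ℝ)).re ∉ msupp (acPart μ))
    (h1 : ∀ s ∈ S, ∃ k ∈ msupp (acPart μt), s < k)
    (h2 : ∀ s ∈ S, ∀ s' ∈ S, s < s' → ∃ k ∈ msupp (acPart μt), s < k ∧ k < s') :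
    S.card ≤ nac + Z.card := by
  classical
  have hmem : ∀ x, ((∃ j, Em j = x) ∨ (x ∉ msupp μ ∧ stTR μ x = 0)) → x ∈ Finset.univ.image Em ∪ Z := by
    rintro x (⟨j, rfl⟩ | h)
    · exact Finset.mem_union_left _ (Finset.mem_image_of_mem _ (Finset.mem_univ j))
    · exact Finset.mem_union_right _ ((hZ x).mpr h)
  have key := fp_cnt (Finset.univ.image Em ∪ Z) S (fun s => (ω (s : ℝ)).re) ?_ ?_
  · refine key.trans ((Finset.card_union_le _ _).trans (add_le_add ?_ le_rfl))
    exact Finset.card_image_le.trans (by simp)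
  · intro s hs
    obtain ⟨k, hk, hsk⟩ := h1 s hs
    obtain ⟨e, r, her, hLe, _⟩ := fp_far hμ ht hω (Or.inl rfl : (1 : ℝ) = 1 ∨ (1 : ℝ) = -1) k
    rw [one_mul] at hLe
    obtain ⟨x, hx, hx1, _⟩ := fp_claim hμ ht hω hμt (fp_real (μ := μ) (hS s hs).1) her (hS s hs).2 hk hsk hLe
    exact ⟨x, hmem x hx, hx1⟩
  · intro s hs s' hs' hss
    obtain ⟨k, hk, hsk, hks⟩ := h2 s hs s' hs' hss
    obtain ⟨x, hx, hx1, hx2⟩ := fp_claim hμ ht hω hμt (fp_real (μ := μ) (hS s hs).1)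
      (fp_real (μ := μ) (hS s' hs').1) (hS s hs).2 hk hsk hks
    exact ⟨x, hmem x hx, hx1, hx2⟩

theorem fp_int_right {K : Set ℝ} {x b : ℝ} (hx : x ∈ interior K) (hb : x < b) : ∃ k ∈ K, x < k ∧ k < b := by
  have h1 : ∀ᶠ y in 𝓝[>] x, y ∈ K := nhdsWithin_le_nhds (mem_interior_iff_mem_nhds.mp hx)
  obtain ⟨k, hk1, hk2⟩ := (h1.and (Ioo_mem_nhdsGT hb)).exists
  exact ⟨k, hk1, hk2.1, hk2.2⟩

theorem fp_int_left {K : Set ℝ} {x b : ℝ} (hx : x ∈ interior K) (hb : b < x) : ∃ k ∈ K, b < k ∧ k < x := by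
  have h1 : ∀ᶠ y in 𝓝[<] x, y ∈ K := nhdsWithin_le_nhds (mem_interior_iff_mem_nhds.mp hx)
  obtain ⟨k, hk1, hk2⟩ := (h1.and (Ioo_mem_nhdsLT hb)).exists
  exact ⟨k, hk1, hk2.1, hk2.2⟩

theorem fp_PZ {μ μt : Measure ℝ} {nac npp nppout : ℕ} {Em Ep : Fin nac → ℝ} {atom : Fin npp → ℝ}
    {ρ : ℝ → ℝ} (hμ : Assumption1 μ nac npp nppout Em Ep atom ρ) {t : ℝ} (ht : 1 < t) {ω : ℂ → ℂ}
    (hω : IsSubordT μ t ω) (hμt : IsFreePow μ ω μt) (Z : Finset ℝ)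
    (hZ : ∀ z, z ∈ Z ↔ z ∉ msupp μ ∧ stTR μ z = 0) (P B : Finset ℝ)
    (hPK : ∀ p ∈ P, p ∈ msupp (acPart μt))
    (hP : ∀ p ∈ P, ∀ p' ∈ P, p < p' → ∃ y ∈ Ioo p p', y ∉ msupp (acPart μt))
    (hB : ∀ x ∈ B, x ∈ interior (msupp (acPart μt)) ∧ densityVanishesAt μt x) :
    P.card + B.card ≤ nac + Z.card := by
  classical
  have hex : ∀ p : ℝ, ∃ y : ℝ, p ∈ P → (((ω y).im = 0 ∧ (ω y).re ∉ msupp (acPart μ)) ∧ y < p ∧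
      (∀ p' ∈ P, p' < p → p' < y) ∧ y ∉ B) := by
    intro p
    by_cases hp : p ∈ P
    · by_cases hne : (P.filter fun x => x < p).Nonempty
      · obtain ⟨q, hq, hmax⟩ := Finset.exists_max_image _ id hne
        rw [Finset.mem_filter] at hq
        obtain ⟨y, hy, hyK⟩ := hP q hq.1 p hp hq.2
        refine ⟨y, fun _ => ⟨fp_good hμ ht hω hμt hyK, hy.2, ?_, ?_⟩⟩
        · intro p' hp' hpp
          exact lt_of_le_of_lt (hmax p' (Finset.mem_filter.mpr ⟨hp', hpp⟩)) hy.1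
        · intro hyB
          exact hyK (interior_subset (hB y hyB).1)
      · obtain ⟨M, hM⟩ := (B.finite_toSet).bddBelow
        obtain ⟨e, r, her, hLe, hrs⟩ := fp_far hμ ht hω (Or.inr rfl : (-1 : ℝ) = 1 ∨ (-1 : ℝ) = -1)
          (max (-p) (-M))
        have m1 := le_max_left (-p) (-M)
        have m2 := le_max_right (-p) (-M)
        refine ⟨e, fun _ => ⟨⟨by rw [her]; simp, ?_⟩, by linarith, ?_, ?_⟩⟩
        · rw [her, Complex.ofReal_re]
          exact fun h => hrs (fp_msupp_ac μ h)
        · intro p' hp' hpp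
          exact absurd ⟨p', Finset.mem_filter.mpr ⟨hp', hpp⟩⟩ hne
        · intro heB
          have := hM heB
          linarith
    · exact ⟨0, fun h => absurd h hp⟩
  choose y hy using hex
  have hlt : ∀ p ∈ P, ∀ p' ∈ P, p < p' → y p < y p' := fun p hp p' hp' hpp =>
    (hy p hp).2.1.trans ((hy p' hp').2.2.1 p hp hpp)
  have hinj : Set.InjOn y P := by
    intro s hs s' hs' hss
    rcases lt_trichotomy s s' with h | h | h
    · exact absurd hss (hlt s hs s' hs' h).ne
    · exact h
    · exact absurd hss (hlt s' hs' s hs h).ne'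
  have hdisj : Disjoint (P.image y) B := by
    rw [Finset.disjoint_left]
    intro x hx
    obtain ⟨p, hp, rfl⟩ := Finset.mem_image.mp hx
    exact (hy p hp).2.2.2
  have hcard : (P.image y ∪ B).card = P.card + B.card := by
    rw [Finset.card_union_of_disjoint hdisj, Finset.card_image_of_injOn hinj]
  rw [← hcard]
  refine fp_Scount hμ ht hω hμt Z hZ _ ?_ ?_ ?_
  · intro s hs
    rcases Finset.mem_union.mp hs with h | h
    · obtain ⟨p, hp, rfl⟩ := Finset.mem_image.mp h
      exact (hy p hp).1
    · exact fp_van_good hμ ht hω hμt (hB s h).2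
  · intro s hs
    rcases Finset.mem_union.mp hs with h | h
    · obtain ⟨p, hp, rfl⟩ := Finset.mem_image.mp h
      exact ⟨p, hPK p hp, (hy p hp).2.1⟩
    · obtain ⟨k, hk, hk1, _⟩ := fp_int_right (hB s h).1 (show s < s + 1 by linarith)
      exact ⟨k, hk, hk1⟩
  · intro s hs s' hs' hss
    rcases Finset.mem_union.mp hs with h | h
    · rcases Finset.mem_union.mp hs' with h' | h'
      · obtain ⟨p, hp, rfl⟩ := Finset.mem_image.mp h
        obtain ⟨p', hp', rfl⟩ := Finset.mem_image.mp h'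
        have hpp : p < p' := by
          by_contra hcon
          push Not at hcon
          rcases hcon.eq_or_lt with h3 | h3
          · rw [h3] at hss; exact lt_irrefl _ hss
          · exact lt_asymm hss (hlt p' hp' p hp h3)
        exact ⟨p, hPK p hp, (hy p hp).2.1, (hy p' hp').2.2.1 p hp hpp⟩
      · exact fp_int_left (hB s' h').1 hss
    · exact fp_int_right (hB s h).1 hss

theorem fp_comp {K : Set ℝ} {p q : K} (hpq : (p : ℝ) < q)
    (hne : (p : ConnectedComponents K) ≠ q) : ∃ y ∈ Ioo (p : ℝ) q, y ∉ K := by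
  by_contra hcon
  push Not at hcon
  apply hne
  have hsub : Icc (p : ℝ) q ⊆ K := by
    intro x hx
    rcases hx.1.eq_or_lt with h | h
    · rw [← h]; exact p.2
    rcases hx.2.eq_or_lt with h' | h'
    · rw [h']; exact q.2
    exact hcon x ⟨h, h'⟩
  have hpre : IsPreconnected ((Subtype.val : K → ℝ) ⁻¹' Icc (p : ℝ) q) := by
    rw [← Topology.IsInducing.subtypeVal.isPreconnected_image, Subtype.image_preimage_coe,
      inter_eq_right.mpr hsub]
    exact isPreconnected_Icc
  rw [ConnectedComponents.coe_eq_coe']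
  exact hpre.subset_connectedComponent (x := q) ⟨hpq.le, le_rfl⟩ ⟨le_rfl, hpq.le⟩

theorem fp_AB {μ μt : Measure ℝ} {nac npp nppout : ℕ} {Em Ep : Fin nac → ℝ} {atom : Fin npp → ℝ}
    {ρ : ℝ → ℝ} (hμ : Assumption1 μ nac npp nppout Em Ep atom ρ) {t : ℝ} (ht : 1 < t) {ω : ℂ → ℂ}
    (hω : IsSubordT μ t ω) (hμt : IsFreePow μ ω μt) (Z : Finset ℝ)
    (hZ : ∀ z, z ∈ Z ↔ z ∉ msupp μ ∧ stTR μ z = 0)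
    (A : Finset (ConnectedComponents ↥(msupp (acPart μt)))) (B : Finset ℝ)
    (hB : ∀ x ∈ B, x ∈ interior (msupp (acPart μt)) ∧ densityVanishesAt μt x) :
    A.card + B.card ≤ nac + Z.card := by
  classical
  have hsurj := ConnectedComponents.surjective_coe (α := ↥(msupp (acPart μt)))
  choose o ho using hsurj
  have hinj : Function.Injective (fun c => (o c : ℝ)) := by
    intro c c' h
    have : o c = o c' := Subtype.ext h
    rw [← ho c, ← ho c', this]
  rw [← Finset.card_image_of_injective A hinj]
  refine fp_PZ hμ ht hω hμt Z hZ _ B ?_ ?_ hB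
  · intro p hp
    obtain ⟨c, _, rfl⟩ := Finset.mem_image.mp hp
    exact (o c).2
  · intro p hp p' hp' hpp
    obtain ⟨c, _, rfl⟩ := Finset.mem_image.mp hp
    obtain ⟨c', _, rfl⟩ := Finset.mem_image.mp hp'
    refine fp_comp hpp ?_
    rw [ho, ho]
    rintro rfl
    exact lt_irrefl _ hpp

theorem fp_part3 {μ μt : Measure ℝ} {nac npp nppout : ℕ} {Em Ep : Fin nac → ℝ} {atom : Fin npp → ℝ}
    {ρ : ℝ → ℝ} (hμ : Assumption1 μ nac npp nppout Em Ep atom ρ) {t : ℝ} (ht : 1 < t) {ω : ℂ → ℂ}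
    (hω : IsSubordT μ t ω) (hμt : IsFreePow μ ω μt) :
    Nat.card ↥{x : ℝ | x ∈ msupp (acPart μt) ∧ μt {x} = 0 ∧ densityDivergesAt μt x}
      = Nat.card {j : Fin npp // μ {atom j} = ENNReal.ofReal (1 - 1 / t)} := by
  have := hμ.prob
  have := hμt.1
  have ht0 : 0 < t := by linarith
  have hpos : 0 < 1 - 1 / t := by rw [sub_pos, div_lt_one ht0]; exact ht
  have hz : ∀ x : ℝ, μt.real {x} = 0 → μt {x} = 0 := by
    intro x h0
    rw [measureReal_def, ENNReal.toReal_eq_zero_iff] at h0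
    exact h0.resolve_right (measure_ne_top _ _)
  have hfor : ∀ j, μ {atom j} = ENNReal.ofReal (1 - 1 / t) →
      t * atom j ∈ {x : ℝ | x ∈ msupp (acPart μt) ∧ μt {x} = 0 ∧ densityDivergesAt μt x} := by
    intro j hj
    have hm : μ.real {atom j} = 1 - 1 / t := by
      rw [measureReal_def, hj, ENNReal.toReal_ofReal hpos.le]
    have h1 := fp_heavy ht hω (atom j) hm.ge (fp_restr hμ (atom j))
    have h2 := fp_D_atom ht hω hμt h1 rfl
    have h3 : μt {t * atom j} = 0 := by
      apply hz
      rw [h2, hm]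
      field_simp
      ring
    exact ⟨fp_div_mem ht hω hμt (fp_hfin hμ) h1 rfl h3, h3, fp_D_div ht hω hμt h1 rfl⟩
  symm
  refine Nat.card_congr (Equiv.ofBijective (fun j => ⟨t * atom j.1, hfor j.1 j.2⟩) ⟨?_, ?_⟩)
  · intro j j' h
    have h1 : t * atom j.1 = t * atom j'.1 := congrArg Subtype.val h
    have h2 := mul_left_cancel₀ ht0.ne' h1
    exact Subtype.ext (hμ.atom_inj h2)
  · rintro ⟨x, _, hx0, hxd⟩
    have hQ : (t : ℂ) * ω x - x = 0 := by
      by_contra hne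
      have h1 := (Complex.continuous_im.tendsto _).comp (fp_M_tend ht hω hμt x hne)
      exact not_tendsto_nhds_of_tendsto_atTop hxd _ h1
    have him : (ω x).im = 0 := by
      have := congrArg Complex.im hQ
      simp at this
      exact this.resolve_left ht0.ne'
    have hr := fp_real (μ := μ) him
    have hxe : x = t * (ω x).re := by
      have := congrArg Complex.re hQ
      simp at this
      linarith
    have h1 := fp_D_mass ht hω hr hxe
    have h2 := fp_D_atom ht hω hμt hr hxe
    obtain ⟨j, hj⟩ := fp_atoms hμ (lt_of_lt_of_le hpos h1)
    have h3 : μ.real {(ω x).re} = 1 - 1 / t := by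
      rw [measureReal_def, hx0, ENNReal.toReal_zero] at h2
      field_simp
      linarith
    refine ⟨⟨j, ?_⟩, ?_⟩
    · rw [hj, ← h3, ofReal_measureReal]
    · apply Subtype.ext
      simp only
      rw [hj]
      exact hxe.symm

theorem free_power_support_bound
    (μ μt : Measure ℝ) (t : ℝ) (ht : 1 < t)
    (nac npp nppout : ℕ) (Em Ep : Fin nac → ℝ) (atom : Fin npp → ℝ) (ρ : ℝ → ℝ)
    (hμ : Assumption1 μ nac npp nppout Em Ep atom ρ)
    (ω : ℂ → ℂ) (hω : IsSubordT μ t ω)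
    (hμt : IsFreePow μ ω μt) :
    (Nat.card (ConnectedComponents ↥(msupp (acPart μt)))
        + Nat.card ↥{x : ℝ | x ∈ interior (msupp (acPart μt)) ∧ densityVanishesAt μt x}
      ≤ nac + Nat.card ↥{E : ℝ | E ∉ msupp μ ∧ stTR μ E = 0}) ∧
    (nac + Nat.card ↥{E : ℝ | E ∉ msupp μ ∧ stTR μ E = 0}
      ≤ 2 * nac + nppout - 1) ∧
    Nat.card ↥{x : ℝ | x ∈ msupp (acPart μt) ∧ μt {x} = 0 ∧ densityDivergesAt μt x}
      = Nat.card {j : Fin npp // μ {atom j} = ENNReal.ofReal (1 - 1 / t)} := by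
  classical
  set ZS : Set ℝ := {E : ℝ | E ∉ msupp μ ∧ stTR μ E = 0} with hZS
  have hZfin : ZS.Finite := by
    by_contra hinf
    obtain ⟨B, hB1, hB2⟩ := Set.Infinite.exists_subset_card_eq hinf (nac + nppout)
    have := fp_Zcount hμ B (fun z hz => hB1 hz)
    omega
  have hZcard : Nat.card ZS = hZfin.toFinset.card := by
    rw [Nat.card_coe_set_eq, Set.ncard_eq_toFinset_card _ hZfin]
  have hZmem : ∀ z, z ∈ hZfin.toFinset ↔ z ∉ msupp μ ∧ stTR μ z = 0 := by
    intro z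
    rw [Set.Finite.mem_toFinset]
    rfl
  refine ⟨?_, ?_, fp_part3 hμ ht hω hμt⟩
  · rw [hZcard]
    set VS : Set ℝ := {x : ℝ | x ∈ interior (msupp (acPart μt)) ∧ densityVanishesAt μt x} with hVS
    have hAB := fun A B (hB : ∀ x ∈ B, x ∈ VS) => fp_AB hμ ht hω hμt hZfin.toFinset hZmem A B hB
    have hVfin : VS.Finite := by
      by_contra hinf
      obtain ⟨B, hB1, hB2⟩ := Set.Infinite.exists_subset_card_eq hinf (nac + hZfin.toFinset.card + 1)
      have := hAB ∅ B (fun z hz => hB1 hz)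
      simp at this
      omega
    have hCfin : Finite (ConnectedComponents ↥(msupp (acPart μt))) := by
      by_contra hinf
      rw [not_finite_iff_infinite] at hinf
      obtain ⟨A, hA⟩ := Infinite.exists_subset_card_eq (ConnectedComponents ↥(msupp (acPart μt)))
        (nac + hZfin.toFinset.card + 1)
      have := hAB A ∅ (by simp)
      simp at this
      omega
    have := Fintype.ofFinite (ConnectedComponents ↥(msupp (acPart μt)))
    have key := hAB Finset.univ hVfin.toFinset (fun x hx => (Set.Finite.mem_toFinset hVfin).mp hx)
    rw [Nat.card_coe_set_eq, Set.ncard_eq_toFinset_card _ hVfin, Nat.card_eq_fintype_card]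
    rw [Finset.card_univ] at key
    exact key
  · rw [hZcard]
    have := fp_Zcount hμ hZfin.toFinset (fun z hz => (hZmem z).mp hz)
    omega
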